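/- arXiv:1407.4190 — 5 statements merged into one kernel-verified Lean document; each statement's English description precedes it below -/
import Mathlib

section
/- Let x0, x1, x2, x3 be four affinely independent points in ℝ³. For each pair 0 ≤ i < j ≤ 3 set t_ij = x_j − x_i and T_ij = t_ij t_ijᵀ (a symmetric 3×3 matrix of rank one). Then the six matrices T_01, T_02, T_03, T_12, T_13, T_23 are linearly independent over ℝ, and hence form a basis of the 6-dimensional real vector space 𝕊 of symmetric 3×3 real matrices. -/
/-!
Let `P` be the matrix with rows `x 1 - x 0`, `x 2 - x 0`, `x 3 - x 0`; it is invertible by affine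
independence. The congruence `B ↦ Pᵀ * B * P` carries the edge tensors of the standard simplex
`0, e₁, e₂, e₃` to the `T ij`, so `∑ c ij • T ij = Pᵀ * S c * P`, where `S c` (`edgeStiffness`)
is the combination of the standard edge tensors with coefficients `c`. The off-diagonal entries
of `S c` are `-c₁₂`, `-c₁₃`, `-c₂₃` and its row sums are `c₀₁`, `c₀₂`, `c₀₃`. Hence `S c = 0`
forces `c = 0`, and every symmetric matrix is `S c` for a suitable `c`; conjugating by `P`
gives independence and spanning.
-/

open Matrix

/-- The index type of the edges `i < j` of a tetrahedron. -/
abbrev Edge := {p : Fin 4 × Fin 4 // p.1 < p.2}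

/-- The combination, with coefficients `c`, of the six edge tensors of the standard simplex
`0, e₁, e₂, e₃`: a weighted graph Laplacian of the complete graph on four vertices with the row
and column of vertex `0` deleted. -/
def edgeStiffness (c : Edge → ℝ) : Matrix (Fin 3) (Fin 3) ℝ :=
  let c01 := c ⟨(0, 1), by decide⟩
  let c02 := c ⟨(0, 2), by decide⟩
  let c03 := c ⟨(0, 3), by decide⟩
  let c12 := c ⟨(1, 2), by decide⟩
  let c13 := c ⟨(1, 3), by decide⟩
  let c23 := c ⟨(2, 3), by decide⟩
  !![c01 + c12 + c13, -c12, -c13;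
     -c12, c02 + c12 + c23, -c23;
     -c13, -c23, c03 + c13 + c23]

lemma sum_edge {M : Type*} [AddCommMonoid M] (f : Edge → M) :
    ∑ e, f e = f ⟨(0, 1), by decide⟩ + (f ⟨(0, 2), by decide⟩ + (f ⟨(0, 3), by decide⟩ +
      (f ⟨(1, 2), by decide⟩ + (f ⟨(1, 3), by decide⟩ + f ⟨(2, 3), by decide⟩)))) := by
  have h : (Finset.univ : Finset Edge) =
      {⟨(0, 1), by decide⟩, ⟨(0, 2), by decide⟩, ⟨(0, 3), by decide⟩,
        ⟨(1, 2), by decide⟩, ⟨(1, 3), by decide⟩, ⟨(2, 3), by decide⟩} := by decide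
  rw [h]
  repeat rw [Finset.sum_insert (by decide)]
  rw [Finset.sum_singleton]

lemma sum_smul_edge_tensor (x : Fin 4 → Fin 3 → ℝ) (c : Edge → ℝ) :
    ∑ e : Edge, c e • vecMulVec (x e.1.2 - x e.1.1) (x e.1.2 - x e.1.1) =
      (of ![x 1 - x 0, x 2 - x 0, x 3 - x 0])ᵀ * edgeStiffness c *
        of ![x 1 - x 0, x 2 - x 0, x 3 - x 0] := by
  rw [sum_edge]
  ext i j
  simp only [edgeStiffness, Matrix.add_apply, Matrix.smul_apply, vecMulVec_apply, Matrix.mul_apply,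
    Fin.sum_univ_three, transpose_apply, of_apply, cons_val, Pi.sub_apply, smul_eq_mul]
  ring

lemma eq_zero_of_edgeStiffness_eq_zero {c : Edge → ℝ} (h : edgeStiffness c = 0) (e : Edge) :
    c e = 0 := by
  have h00 := congrFun₂ h 0 0
  have h11 := congrFun₂ h 1 1
  have h22 := congrFun₂ h 2 2
  have h01 := congrFun₂ h 0 1
  have h02 := congrFun₂ h 0 2
  have h12 := congrFun₂ h 1 2
  simp only [edgeStiffness, of_apply, cons_val, Matrix.zero_apply] at h00 h11 h22 h01 h02 h12
  obtain ⟨⟨i, j⟩, hij⟩ := e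
  fin_cases i <;> fin_cases j <;> first | exact absurd hij (by decide) | (simp; linarith)

lemma exists_edgeStiffness_eq {B : Matrix (Fin 3) (Fin 3) ℝ} (hB : B.IsSymm) :
    ∃ c, edgeStiffness c = B := by
  -- `c₀ⱼ` is the `j`-th row sum of `B`; the other `cᵢⱼ` are negated off-diagonal entries.
  let c : Fin 4 → Fin 4 → ℝ :=
    ![![0, B 0 0 + B 0 1 + B 0 2, B 1 0 + B 1 1 + B 1 2, B 2 0 + B 2 1 + B 2 2],
      ![0, 0, -B 0 1, -B 0 2], ![0, 0, 0, -B 1 2], 0]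
  refine ⟨fun e => c e.1.1 e.1.2, ?_⟩
  have h01 := hB.apply 0 1
  have h02 := hB.apply 0 2
  have h12 := hB.apply 1 2
  ext i j
  fin_cases i <;> fin_cases j <;> simp [edgeStiffness, c] <;> linarith

/-- The six edge tensors `T_ij = t_ij t_ijᵀ` of a nondegenerate tetrahedron are
linearly independent and span the space of symmetric 3×3 real matrices. -/
theorem edge_tensors_linearIndependent_and_basis
    (x : Fin 4 → Fin 3 → ℝ)
    (hx : LinearIndependent ℝ ![x 1 - x 0, x 2 - x 0, x 3 - x 0])
    (T : {p : Fin 4 × Fin 4 // p.1 < p.2} → Matrix (Fin 3) (Fin 3) ℝ)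
    (hT : ∀ ij, T ij = vecMulVec (x ij.1.2 - x ij.1.1) (x ij.1.2 - x ij.1.1)) :
    LinearIndependent ℝ T ∧
      (Submodule.span ℝ (Set.range T) : Set (Matrix (Fin 3) (Fin 3) ℝ))
        = {A : Matrix (Fin 3) (Fin 3) ℝ | A.IsSymm} := by
  have key : ∀ c : Edge → ℝ, ∑ e, c e • T e = _ := fun c => by
    simp only [hT]
    exact sum_smul_edge_tensor x c
  set P : Matrix (Fin 3) (Fin 3) ℝ := of ![x 1 - x 0, x 2 - x 0, x 3 - x 0] with hP
  have hU : IsUnit P := linearIndependent_rows_iff_isUnit.mp hx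
  have hUt : IsUnit Pᵀ := (isUnit_transpose P).mpr hU
  refine ⟨Fintype.linearIndependent_iff.mpr fun c hc => ?_, ?_⟩
  · rw [key, hU.mul_left_eq_zero, hUt.mul_right_eq_zero] at hc
    exact eq_zero_of_edgeStiffness_eq_zero hc
  · apply Set.Subset.antisymm
    · intro A hA
      induction hA using Submodule.span_induction with
      | mem A hA =>
        obtain ⟨e, rfl⟩ := hA
        simp [hT, IsSymm, transpose_vecMulVec]
      | zero => exact isSymm_zero
      | add A B _ _ hA hB => exact hA.add hB
      | smul r A _ hA => exact hA.smul r
    · intro A hA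
      have hdet : IsUnit P.det := (isUnit_iff_isUnit_det P).mp hU
      have hdett : IsUnit Pᵀ.det := (isUnit_iff_isUnit_det _).mp hUt
      have hB : ((Pᵀ)⁻¹ * A * P⁻¹).IsSymm := by
        have hA' : Aᵀ = A := hA
        simp [IsSymm, transpose_mul, transpose_nonsing_inv, hA', Matrix.mul_assoc]
      obtain ⟨c, hc⟩ := exists_edgeStiffness_eq hB
      have hAc : A = ∑ e, c e • T e := by
        rw [key, hc, Matrix.mul_assoc, nonsing_inv_mul_cancel_right _ _ hdet,
          mul_nonsing_inv_cancel_left _ _ hdett]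
      rw [hAc]
      exact Submodule.sum_mem _ fun e _ =>
        Submodule.smul_mem _ _ (Submodule.subset_span ⟨e, rfl⟩)
end

section
/- Let x0, x1, x2, x3 be four affinely independent points in ℝ³ with barycentric coordinate functions λ_0, λ_1, λ_2, λ_3, edge vectors t_ij = x_j − x_i and edge tensors T_ij = t_ij t_ijᵀ. Fix a pair 0 ≤ i < j ≤ 3 and a polynomial p : ℝ³ → ℝ, and define the symmetric-matrix-valued function σ(x) = λ_i(x) λ_j(x) p(x) T_ij. Then for every m ∈ {0,1,2,3} and every x ∈ ℝ³ with λ_m(x) = 0, one has σ(x) (∇λ_m) = 0; that is, the edge-bubble function has vanishing normal component on each of the four face planes of the tetrahedron. -/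
open Matrix

/-- An edge-bubble function `σ = λ_i λ_j p T_ij` has vanishing normal component on
each of the four face planes of the tetrahedron: `σ(x) ∇λ_m = 0` whenever `λ_m(x) = 0`. -/
theorem edge_bubble_vanishing_normal_component
    (x : Fin 4 → Fin 3 → ℝ)
    (hx : LinearIndependent ℝ ![x 1 - x 0, x 2 - x 0, x 3 - x 0])
    (lam : Fin 4 → (Fin 3 → ℝ) → ℝ) (c : Fin 4 → ℝ) (g : Fin 4 → Fin 3 → ℝ)
    (hlam : ∀ m y, lam m y = c m + g m ⬝ᵥ y)
    (hdelta : ∀ m l, lam m (x l) = if m = l then 1 else 0)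
    (i j : Fin 4) (hij : i < j)
    (p : MvPolynomial (Fin 3) ℝ)
    (σ : (Fin 3 → ℝ) → Matrix (Fin 3) (Fin 3) ℝ)
    (hσ : ∀ y, σ y = (lam i y * lam j y * MvPolynomial.eval y p) •
        vecMulVec (x j - x i) (x j - x i)) :
    ∀ m : Fin 4, ∀ y : Fin 3 → ℝ, lam m y = 0 → (σ y) *ᵥ g m = 0 := by
  intro m y hy
  rw [hσ]
  by_cases hi : m = i
  · subst hi; simp [hy]
  by_cases hj : m = j
  · subst hj; simp [hy]
  -- Both endpoints of the edge lie on the face plane `λ_m = 0`, so `t_ij` is orthogonal to `∇λ_m`.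
  have h : (x j - x i) ⬝ᵥ g m = 0 := by
    have h1 := hdelta m i
    have h2 := hdelta m j
    rw [hlam, if_neg hi] at h1
    rw [hlam, if_neg hj] at h2
    rw [dotProduct_comm, dotProduct_sub]
    linarith
  rw [smul_mulVec, vecMulVec_mulVec, h]
  simp
end

section
/- Let x0, x1, x2, x3 ∈ ℝ³ be affinely independent, with barycentric coordinates λ_0, …, λ_3, edge tensors T_ij = (x_j − x_i)(x_j − x_i)ᵀ, and K = conv{x0, x1, x2, x3}. Let k ≥ 4 be an integer and let v : ℝ³ → ℝ³ be a polynomial vector field of degree at most k − 1 such that (i) ∫_K v(x) · r(x) dx = 0 for every rigid motion r(x) = a + W x (a ∈ ℝ³, W skew-symmetric), and (ii) for every pair 0 ≤ i < j ≤ 3 and every polynomial p : ℝ³ → ℝ of degree at most k − 2, ∫_K λ_i(x) λ_j(x) p(x) ( T_ij : ε(v)(x) ) dx = 0, where ε(v) = (∇v + (∇v)ᵀ)/2 and A : B = Σ_{l,m} A_{lm} B_{lm} is the Frobenius product. Then v = 0. -/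
/-!
For `i < j` the scalar `q = T_ij : ε(v)` is a polynomial of degree at most `k - 2`, hence an
admissible weight `p` in the bubble condition, which then reads `∫_K λ_i λ_j q² = 0`. The integrand
is a nonnegative polynomial on `K`, and `K` has nonempty interior, so it is the zero polynomial
(`eq_zero_of_integral_eq_zero`) and `q = 0`. The six edge tensors separate symmetric matrices
(`symm_eq_zero_of_edges`, by polarization), so `ε(v) = 0`.

A polynomial field with `ε(v) = 0` is a rigid motion (`exists_rigid_of_symm_grad_eq_zero`): its second
derivatives `∂_i ∂_j v_l` are symmetric in `i, j` and antisymmetric in `j, l`, hence vanish.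
Testing the first orthogonality with `r = v` gives `∫_K |v|² = 0`, so `v = 0`.
-/

open Matrix MvPolynomial MeasureTheory

section PolynomialCalculus

variable {σ : Type*}

theorem totalDegree_pderiv_le (i : σ) (p : MvPolynomial σ ℝ) :
    (pderiv i p).totalDegree ≤ p.totalDegree - 1 := by
  refine Finset.sup_le fun m hm => ?_
  rw [mem_support_iff, coeff_pderiv] at hm
  have h := le_totalDegree (mem_support_iff.2 (left_ne_zero_of_mul hm))
  rw [Finsupp.sum_add_index' (by simp) (by simp), Finsupp.sum_single_index rfl] at h
  omega

theorem pderiv_comm (i j : σ) (p : MvPolynomial σ ℝ) :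
    pderiv i (pderiv j p) = pderiv j (pderiv i p) := by
  classical
  have h : ⁅pderiv (R := ℝ) i, pderiv (R := ℝ) j⁆ = 0 := by
    refine derivation_ext fun l => ?_
    by_cases hi : l = i <;> by_cases hj : l = j <;>
      simp [Derivation.commutator_apply, pderiv_X, Pi.single_apply, hi, hj, apply_ite]
  have := congrArg (fun D => D p) h
  simpa [Derivation.commutator_apply, sub_eq_zero] using this

/-- In characteristic zero, a polynomial with vanishing gradient is constant. -/
theorem eq_C_of_pderiv_eq_zero (p : MvPolynomial σ ℝ) (h : ∀ i, pderiv i p = 0) :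
    p = C (coeff 0 p) := by
  classical
  ext m
  rw [coeff_C]
  split_ifs with hm
  · rw [hm]
  · obtain ⟨i, hi⟩ : ∃ i, m i ≠ 0 := by
      by_contra! hc
      exact hm (Finsupp.ext fun i => (hc i).symm)
    have hle : Finsupp.single i 1 ≤ m := by
      simpa [Finsupp.single_le_iff] using Nat.one_le_iff_ne_zero.2 hi
    have h' := congrArg (coeff (m - Finsupp.single i 1)) (h i)
    rw [coeff_pderiv, tsub_add_cancel_of_le hle, coeff_zero] at h'
    refine (mul_eq_zero.1 h').resolve_right ?_
    positivity

end PolynomialCalculus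

theorem exists_rigid_of_symm_grad_eq_zero (v : Fin 3 → MvPolynomial (Fin 3) ℝ)
    (h : ∀ l m, pderiv m (v l) + pderiv l (v m) = 0) :
    ∃ (a : Fin 3 → ℝ) (W : Matrix (Fin 3) (Fin 3) ℝ), Wᵀ = -W ∧
      ∀ y l, eval y (v l) = a l + (W *ᵥ y) l := by
  have anti : ∀ l m, pderiv m (v l) = -pderiv l (v m) := fun l m =>
    eq_neg_of_add_eq_zero_left (h l m)
  have second : ∀ i j l, pderiv i (pderiv j (v l)) = 0 := by
    intro i j l
    have e : pderiv i (pderiv j (v l)) = -pderiv i (pderiv j (v l)) := by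
      calc pderiv i (pderiv j (v l)) = -pderiv l (pderiv i (v j)) := by
            rw [anti l j, map_neg, pderiv_comm]
        _ = pderiv j (pderiv l (v i)) := by rw [anti j i, map_neg, neg_neg, pderiv_comm]
        _ = -pderiv i (pderiv j (v l)) := by rw [anti i l, map_neg, pderiv_comm]
    exact self_eq_neg.1 e
  have first : ∀ l m, pderiv m (v l) = C (coeff 0 (pderiv m (v l))) := fun l m =>
    eq_C_of_pderiv_eq_zero _ fun i => second i m l
  let W : Matrix (Fin 3) (Fin 3) ℝ := Matrix.of fun l m => coeff 0 (pderiv m (v l))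
  have hv : ∀ l, v l - ∑ m, C (W l m) * X m = C (coeff 0 (v l - ∑ m, C (W l m) * X m)) := by
    refine fun l => eq_C_of_pderiv_eq_zero _ fun i => ?_
    have : pderiv i (v l) = C (W l i) := first l i
    simp [this, map_sum, pderiv_X, Pi.single_apply]
  refine ⟨fun l => coeff 0 (v l - ∑ m, C (W l m) * X m), W, ?_, fun y l => ?_⟩
  · ext l m
    simp only [W, Matrix.transpose_apply, Matrix.neg_apply, Matrix.of_apply]
    rw [anti m l, coeff_neg]
  · have := congrArg (eval y) (hv l)
    rw [eval_C, map_sub, sub_eq_iff_eq_add] at this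
    rw [this]
    simp [Matrix.mulVec, dotProduct]

theorem eq_zero_of_eqOn_open (p : MvPolynomial (Fin 3) ℝ) {U : Set (Fin 3 → ℝ)} (hU : IsOpen U)
    (hne : U.Nonempty) (h : ∀ y ∈ U, eval y p = 0) : p = 0 := by
  obtain ⟨y, hy⟩ := hne
  obtain ⟨r, hr, hball⟩ := Metric.isOpen_iff.1 hU y hy
  rw [ball_pi y hr] at hball
  refine funext_set (fun i => Metric.ball (y i) r) (fun i => ?_) fun z hz => ?_
  · rw [Real.ball_eq_Ioo]
    exact Set.Ioo_infinite (by linarith)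
  · rw [h z (hball hz), map_zero]

theorem eq_zero_of_integral_eq_zero (p : MvPolynomial (Fin 3) ℝ) {K : Set (Fin 3 → ℝ)}
    (hK : IsCompact K) (hne : (interior K).Nonempty) (hpos : ∀ y ∈ K, 0 ≤ eval y p)
    (hint : ∫ y in K, eval y p = 0) : p = 0 := by
  have hcont : Continuous fun y => eval y p := continuous_eval p
  have hae : 0 ≤ᵐ[volume.restrict K] fun y => eval y p :=
    (ae_restrict_iff' hK.measurableSet).2 (Filter.Eventually.of_forall hpos)
  have hzero := (setIntegral_eq_zero_iff_of_nonneg_ae hae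
    (hcont.continuousOn.integrableOn_compact hK)).1 hint
  have hopen := ae_restrict_of_ae_restrict_of_subset interior_subset hzero
  exact eq_zero_of_eqOn_open p isOpen_interior hne
    (Measure.eqOn_open_of_ae_eq hopen isOpen_interior hcont.continuousOn continuousOn_const)

theorem interior_tetrahedron_nonempty (x : Fin 4 → Fin 3 → ℝ)
    (hx : LinearIndependent ℝ ![x 1 - x 0, x 2 - x 0, x 3 - x 0]) :
    (interior (convexHull ℝ {x 0, x 1, x 2, x 3})).Nonempty := by
  rw [interior_convexHull_nonempty_iff_affineSpan_eq_top,
    ← AffineSubspace.direction_eq_top_iff_of_nonempty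
      ((affineSpan_nonempty ℝ).2 ⟨x 0, by simp⟩), direction_affineSpan, eq_top_iff,
    ← hx.span_eq_top_of_card_eq_finrank' (by simp), Submodule.span_le]
  rintro _ ⟨i, rfl⟩
  fin_cases i <;> exact vsub_mem_vectorSpan ℝ (by simp) (by simp)

/-- A symmetric bilinear form that vanishes on the six edge vectors of a nondegenerate tetrahedron
is zero. The rows of `D` are the three edges from one vertex; the other edges are differences of
rows, and polarization gives `D M Dᵀ = 0`. -/
theorem symm_eq_zero_of_edges (D M : Matrix (Fin 3) (Fin 3) ℝ) (hD : LinearIndependent ℝ D)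
    (hM : ∀ l m, M l m = M m l)
    (hdiag : ∀ a, D a ⬝ᵥ M *ᵥ D a = 0)
    (hoff : ∀ a b, a < b → (D b - D a) ⬝ᵥ M *ᵥ (D b - D a) = 0) : M = 0 := by
  have hsymm : ∀ u w : Fin 3 → ℝ, u ⬝ᵥ M *ᵥ w = w ⬝ᵥ M *ᵥ u := by
    intro u w
    have : Mᵀ = M := Matrix.ext fun l m => hM m l
    rw [dotProduct_mulVec, ← mulVec_transpose, this, dotProduct_comm]
  have hlt : ∀ a b, a < b → D a ⬝ᵥ M *ᵥ D b = 0 := by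
    intro a b hab
    have h := hoff a b hab
    rw [mulVec_sub, dotProduct_sub, sub_dotProduct, sub_dotProduct, hdiag, hdiag,
      hsymm (D b) (D a)] at h
    linarith
  have hall : D * M * Dᵀ = 0 := by
    ext a b
    have e : (D * M * Dᵀ) a b = D a ⬝ᵥ M *ᵥ D b := by
      rw [Matrix.mul_assoc]
      rfl
    rw [e, Matrix.zero_apply]
    rcases lt_trichotomy a b with h | rfl | h
    · exact hlt a b h
    · exact hdiag a
    · rw [hsymm]; exact hlt b a h
  have hu : IsUnit D := Matrix.linearIndependent_rows_iff_isUnit.1 hD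
  have hut : IsUnit Dᵀ := (Matrix.isUnit_transpose D).2 hu
  have h1 : D * M = 0 := (hut.mul_left_eq_zero).1 hall
  exact (hu.mul_right_eq_zero).1 h1

/-- If a polynomial vector field `v` of degree ≤ k−1 on the tetrahedron `K` is
L²(K)-orthogonal to all rigid motions and its symmetric gradient `ε(v)` is
L²(K)-orthogonal (in the weighted sense) to all edge bubbles
`λ_i λ_j p T_ij` with `deg p ≤ k−2`, then `v = 0`. -/
theorem rigid_motion_free_orthogonal_to_bubbles_implies_zero
    (x : Fin 4 → Fin 3 → ℝ)
    (hx : LinearIndependent ℝ ![x 1 - x 0, x 2 - x 0, x 3 - x 0])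
    (lam : Fin 4 → (Fin 3 → ℝ) → ℝ) (c : Fin 4 → ℝ) (g : Fin 4 → Fin 3 → ℝ)
    (hlam : ∀ m y, lam m y = c m + g m ⬝ᵥ y)
    (hdelta : ∀ m l, lam m (x l) = if m = l then 1 else 0)
    (k : ℕ) (hk : 4 ≤ k)
    (v : Fin 3 → MvPolynomial (Fin 3) ℝ)
    (hvdeg : ∀ l, (v l).totalDegree ≤ k - 1)
    (h1 : ∀ (a : Fin 3 → ℝ) (W : Matrix (Fin 3) (Fin 3) ℝ), Wᵀ = -W →
      ∫ y in convexHull ℝ {x 0, x 1, x 2, x 3},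
        (∑ l, eval y (v l) * (a l + (W *ᵥ y) l)) = 0)
    (h2 : ∀ i j : Fin 4, i < j →
      ∀ p : MvPolynomial (Fin 3) ℝ, p.totalDegree ≤ k - 2 →
      ∫ y in convexHull ℝ {x 0, x 1, x 2, x 3},
        lam i y * lam j y * eval y p *
          (∑ l, ∑ m, vecMulVec (x j - x i) (x j - x i) l m *
            ((eval y (pderiv m (v l)) + eval y (pderiv l (v m))) / 2)) = 0) :
    ∀ l, v l = 0 := by
  have hK : IsCompact (convexHull ℝ {x 0, x 1, x 2, x 3}) :=
    Set.Finite.isCompact_convexHull ℝ (Set.toFinite _)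
  have hint := interior_tetrahedron_nonempty x hx
  have hlam_nonneg : ∀ m, ∀ y ∈ convexHull ℝ {x 0, x 1, x 2, x 3}, 0 ≤ lam m y := by
    intro m
    have hconv : Convex ℝ {y | 0 ≤ lam m y} := by
      intro y hy z hz s t hs ht hst
      have hy' : 0 ≤ lam m y := hy
      have hz' : 0 ≤ lam m z := hz
      have e : lam m (s • y + t • z) = s * lam m y + t * lam m z := by
        rw [hlam, hlam, hlam, dotProduct_add, dotProduct_smul, dotProduct_smul, smul_eq_mul,
          smul_eq_mul]
        linear_combination (-c m) * hst
      show 0 ≤ lam m (s • y + t • z)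
      rw [e]
      positivity
    refine fun y hy => convexHull_min ?_ hconv hy
    have hvert : ∀ l, 0 ≤ lam m (x l) := fun l => by
      rw [hdelta]; split_ifs <;> norm_num
    rintro _ (rfl | rfl | rfl | rfl) <;> exact hvert _
  -- The barycentric coordinates as nonzero polynomials.
  let L : Fin 4 → MvPolynomial (Fin 3) ℝ := fun m => C (c m) + ∑ l, C (g m l) * X l
  have hL : ∀ m y, eval y (L m) = lam m y := fun m y => by
    simp [L, hlam, dotProduct]
  have hL0 : ∀ m, L m ≠ 0 := fun m h => by
    have := hL m (x m)
    rw [h, hdelta] at this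
    simp at this
  have edge : ∀ i j : Fin 4, i < j → ∀ y, (∑ l, ∑ m, vecMulVec (x j - x i) (x j - x i) l m *
      ((eval y (pderiv m (v l)) + eval y (pderiv l (v m))) / 2)) = 0 := by
    intro i j hij
    let q : MvPolynomial (Fin 3) ℝ := ∑ l, ∑ m, C (vecMulVec (x j - x i) (x j - x i) l m / 2) *
      (pderiv m (v l) + pderiv l (v m))
    have hq : ∀ y, eval y q = ∑ l, ∑ m, vecMulVec (x j - x i) (x j - x i) l m *
        ((eval y (pderiv m (v l)) + eval y (pderiv l (v m))) / 2) := by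
      intro y
      simp only [q, map_sum, map_mul, map_add, eval_C]
      exact Finset.sum_congr rfl fun l _ => Finset.sum_congr rfl fun m _ => by ring
    have hd : ∀ l m, (pderiv m (v l)).totalDegree ≤ k - 2 := fun l m =>
      (totalDegree_pderiv_le m (v l)).trans (by have := hvdeg l; omega)
    have hqdeg : q.totalDegree ≤ k - 2 := by
      refine totalDegree_finsetSum_le fun l _ => totalDegree_finsetSum_le fun m _ => ?_
      refine (totalDegree_mul _ _).trans ?_
      rw [totalDegree_C, zero_add]
      exact (totalDegree_add _ _).trans (max_le (hd l m) (hd m l))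
    have hzero : L i * L j * q * q = 0 := by
      refine eq_zero_of_integral_eq_zero _ hK hint (fun y hy => ?_) ?_
      · simp only [map_mul, hL]
        have hi := hlam_nonneg i y hy
        have hj := hlam_nonneg j y hy
        rw [mul_assoc]
        exact mul_nonneg (mul_nonneg hi hj) (mul_self_nonneg _)
      · simpa only [map_mul, hL, hq] using h2 i j hij q hqdeg
    have hq0 : q = 0 := by simpa [hL0] using hzero
    intro y
    rw [← hq, hq0, map_zero]
  have grad : ∀ l m, pderiv m (v l) + pderiv l (v m) = 0 := by
    intro l m
    refine funext fun y => ?_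
    let M : Matrix (Fin 3) (Fin 3) ℝ :=
      Matrix.of fun l m => (eval y (pderiv m (v l)) + eval y (pderiv l (v m))) / 2
    have hform : ∀ i j : Fin 4, i < j → (x j - x i) ⬝ᵥ M *ᵥ (x j - x i) = 0 := by
      intro i j hij
      rw [← edge i j hij y]
      simp only [dotProduct, mulVec, vecMulVec_apply, Finset.mul_sum, M, Matrix.of_apply]
      exact Finset.sum_congr rfl fun l _ => Finset.sum_congr rfl fun m _ => by ring
    have hM : M = 0 := by
      refine symm_eq_zero_of_edges (Matrix.of ![x 1 - x 0, x 2 - x 0, x 3 - x 0]) M hx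
        (fun l m => ?_) (fun a => ?_) (fun a b hab => ?_)
      · simp only [M, Matrix.of_apply, add_comm]
      · fin_cases a
        · exact hform 0 1 (by decide)
        · exact hform 0 2 (by decide)
        · exact hform 0 3 (by decide)
      · have e : ∀ a : Fin 3, Matrix.of ![x 1 - x 0, x 2 - x 0, x 3 - x 0] a = x a.succ - x 0 := by
          intro a; fin_cases a <;> rfl
        rw [e, e, sub_sub_sub_cancel_right]
        exact hform a.succ b.succ (Fin.succ_lt_succ_iff.2 hab)
    have := congrFun (congrFun hM l) m
    simp only [M, Matrix.of_apply, Matrix.zero_apply] at this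
    rw [map_add, map_zero]
    linarith
  obtain ⟨a, W, hW, hv⟩ := exists_rigid_of_symm_grad_eq_zero v grad
  have hsq : ∑ l, v l * v l = 0 := by
    refine eq_zero_of_integral_eq_zero _ hK hint (fun y _ => ?_) ?_
    · simp only [map_sum, map_mul]
      exact Finset.sum_nonneg fun l _ => mul_self_nonneg _
    · simpa only [map_sum, map_mul, ← hv] using h1 a W hW
  refine fun l => funext fun y => ?_
  have h := congrArg (eval y) hsq
  simp only [map_sum, map_mul, map_zero] at h
  rw [Finset.sum_eq_zero_iff_of_nonneg fun l _ => mul_self_nonneg _] at h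
  rw [map_zero]
  exact mul_self_eq_zero.1 (h l (Finset.mem_univ l))
end

section
/- Let x0, x1, x2, x3 ∈ ℝ³ be affinely independent with barycentric coordinates λ_0, …, λ_3, edge tensors T_ij = (x_j − x_i)(x_j − x_i)ᵀ, and K = conv{x0, x1, x2, x3}. Let k ≥ 4 and let τ be any element of the edge-bubble space Σ_{K,b}, i.e., τ(x) = Σ_{0 ≤ i < j ≤ 3} λ_i(x) λ_j(x) p_ij(x) T_ij with each p_ij a polynomial of degree at most k − 2. Then for every rigid motion r(x) = a + W x (a ∈ ℝ³, W skew-symmetric 3×3), ∫_K (div τ)(x) · r(x) dx = 0, where div τ is the row-wise divergence of the matrix field τ. -/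
/-!
Fix an edge `i < j`, put `t = x_j − x_i` and `Q = λ_i λ_j p_ij`. Row `l` of `div (Q T_ij)` is
`t_l ∂_t Q`, so its product with a rigid motion `r` is `(t · r) ∂_t Q`. As `W` is skew-symmetric,
`∂_t (t · r) = t · W t = 0` (`dirDeriv_rigid`), and this product equals `∂_t (λ_i λ_j p_ij (t · r))`.
It therefore suffices that `∫_K ∂_t (λ_i λ_j q) = 0` for every polynomial `q`
(`integral_dirDeriv_edge`).

After relabelling the vertices the edge is `x_0 x_1`. The affine map
`u ↦ x_0 + ∑ u_k (x_{k+1} − x_0)` carries the reference tetrahedron onto `K`, the first coordinate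
direction to `t`, and satisfies `λ_1 = u_0`, `λ_0 = 1 − ∑ u_k`. By Fubini the integral reduces to
integrals along the first coordinate over segments `[0, 1 − u_1 − u_2]`, at whose left end `λ_1`
vanishes and at whose right end `λ_0` vanishes, so each is zero by the fundamental theorem of
calculus (`integral_refSimplex_eq_zero`).
-/

open Matrix MvPolynomial MeasureTheory

/-- The edge tensor `T_ij = (x_j − x_i)(x_j − x_i)ᵀ`. -/
noncomputable def edgeTensor (x : Fin 4 → Fin 3 → ℝ) (i j : Fin 4) :
    Matrix (Fin 3) (Fin 3) ℝ :=
  Matrix.vecMulVec (x j - x i) (x j - x i)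

/-- The `(l,m)` entry of the edge-bubble field `Σ_{i<j} λ_i λ_j p_ij T_ij`,
as a polynomial in the space variables. -/
noncomputable def bubbleEntry (x : Fin 4 → Fin 3 → ℝ)
    (lam : Fin 4 → MvPolynomial (Fin 3) ℝ)
    (p : {q : Fin 4 × Fin 4 // q.1 < q.2} → MvPolynomial (Fin 3) ℝ)
    (l m : Fin 3) : MvPolynomial (Fin 3) ℝ :=
  ∑ ij : {q : Fin 4 × Fin 4 // q.1 < q.2},
    lam ij.1.1 * lam ij.1.2 * p ij * C (edgeTensor x ij.1.1 ij.1.2 l m)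

/-- The `l`-th component of the row-wise divergence of the edge-bubble field. -/
noncomputable def bubbleDiv (x : Fin 4 → Fin 3 → ℝ)
    (lam : Fin 4 → MvPolynomial (Fin 3) ℝ)
    (p : {q : Fin 4 × Fin 4 // q.1 < q.2} → MvPolynomial (Fin 3) ℝ)
    (l : Fin 3) : MvPolynomial (Fin 3) ℝ :=
  ∑ m : Fin 3, pderiv m (bubbleEntry x lam p l m)

theorem exists_affine_form (P : MvPolynomial (Fin 3) ℝ) (h : P.totalDegree ≤ 1) :
    ∃ (c : ℝ) (g : Fin 3 → ℝ), ∀ y, eval y P = c + g ⬝ᵥ y := by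
  refine ⟨coeff 0 P, fun i => coeff (Finsupp.single i 1) P, fun y => ?_⟩
  have hsub : P.support ⊆
      insert 0 (Finset.univ.image fun i : Fin 3 => Finsupp.single i 1) := by
    intro d hd
    have hdeg : d.degree ≤ 1 := (le_totalDegree hd).trans h
    rw [Finset.mem_insert, Finset.mem_image]
    rcases Nat.le_one_iff_eq_zero_or_eq_one.1 hdeg with h0 | h1
    · exact Or.inl ((Finsupp.degree_eq_zero_iff d).1 h0)
    · have hmem : d ∈ {d : Fin 3 →₀ ℕ | d.degree = 1} := h1
      rw [← Finsupp.range_single_one] at hmem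
      obtain ⟨i, hi⟩ := hmem
      exact Or.inr ⟨i, Finset.mem_univ _, hi⟩
  rw [eval_eq, Finset.sum_subset hsub fun d _ hd => by
    rw [notMem_support_iff.1 hd, zero_mul], Finset.sum_insert (by simp [Finsupp.single_eq_zero]),
    Finset.sum_image fun i _ j _ hij => Finsupp.single_left_injective one_ne_zero hij]
  simp [dotProduct, Finsupp.single_apply, Finset.prod_ite_eq, pow_ite]

/-- The derivative `∂_t P = ∑ m, t_m ∂_m P` of a polynomial in the direction `t`. -/
noncomputable def dirDeriv (t : Fin 3 → ℝ) (P : MvPolynomial (Fin 3) ℝ) :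
    MvPolynomial (Fin 3) ℝ := ∑ m, C (t m) * pderiv m P

theorem dirDeriv_mul (t : Fin 3 → ℝ) (P Q : MvPolynomial (Fin 3) ℝ) :
    dirDeriv t (P * Q) = dirDeriv t P * Q + P * dirDeriv t Q := by
  simp only [dirDeriv, Derivation.leibniz, smul_eq_mul, Fin.sum_univ_three]
  ring

theorem hasDerivAt_eval_line (t a : Fin 3 → ℝ) (P : MvPolynomial (Fin 3) ℝ) (s : ℝ) :
    HasDerivAt (fun s : ℝ => eval (a + s • t) P) (eval (a + s • t) (dirDeriv t P)) s := by
  induction P using MvPolynomial.induction_on with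
  | C r => simpa [dirDeriv] using hasDerivAt_const s r
  | add P Q hP hQ =>
    have : dirDeriv t (P + Q) = dirDeriv t P + dirDeriv t Q := by
      simp [dirDeriv, mul_add, Finset.sum_add_distrib]
    rw [this]
    simp only [map_add]
    exact hP.add hQ
  | mul_X P n hP =>
    have hX : dirDeriv t (X n) = C (t n) := by
      simp [dirDeriv, pderiv_X, Pi.single_apply]
    have hl : HasDerivAt (fun s : ℝ => a n + s * t n) (t n) s := by
      simpa using ((hasDerivAt_id s).mul_const (t n)).const_add (a n)
    have hXline : HasDerivAt (fun s : ℝ => eval (a + s • t) (X n)) (t n) s := by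
      simp only [eval_X]
      exact hl
    rw [dirDeriv_mul, hX]
    simp only [map_add, map_mul, eval_C]
    exact hP.mul hXline

/-- The reference tetrahedron `{u | u ≥ 0, ∑ u_k ≤ 1}` in `ℝ³`. -/
def refSimplex : Set (Fin 3 → ℝ) := {u | (∀ k, 0 ≤ u k) ∧ ∑ k, u k ≤ 1}

theorem measurableSet_refSimplex : MeasurableSet refSimplex := by
  have : IsClosed refSimplex := by
    simp only [refSimplex, Set.ofPred_and, Set.ofPred_forall]
    refine IsClosed.inter (isClosed_iInter fun k => ?_) ?_
    · exact isClosed_le continuous_const (continuous_apply k)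
    · exact isClosed_le (by fun_prop) continuous_const
  exact this.measurableSet

/-- If `F` is the derivative of `h` in the first coordinate and `h` vanishes on the faces `u_0 = 0`
and `∑ u_k = 1`, then `F` has integral zero over the reference tetrahedron. -/
theorem integral_refSimplex_eq_zero (h F : (Fin 3 → ℝ) → ℝ) (hF : Continuous F)
    (hd : ∀ (v : Fin 2 → ℝ) (s : ℝ), HasDerivAt (fun s : ℝ => h (Fin.cons s v))
      (F (Fin.cons s v)) s)
    (h0 : ∀ v : Fin 2 → ℝ, h (Fin.cons 0 v) = 0)
    (h1 : ∀ v : Fin 2 → ℝ, h (Fin.cons (1 - ∑ k, v k) v) = 0) :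
    ∫ u in refSimplex, F u = 0 := by
  rw [← integral_indicator measurableSet_refSimplex]
  have e := (volume_preserving_piFinSuccAbove (fun _ : Fin 3 => ℝ) 0).symm
  rw [← e.integral_comp (MeasurableEquiv.measurableEmbedding _)]
  -- A non-integrable function has integral `0` by convention, so Fubini may assume integrability.
  by_cases hi : Integrable (fun z : ℝ × (Fin 2 → ℝ) => refSimplex.indicator F
      ((MeasurableEquiv.piFinSuccAbove (fun _ : Fin 3 => ℝ) 0).symm z)) (volume.prod volume)
  swap
  · exact integral_undef hi
  refine (integral_prod_symm _ hi).trans ?_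
  refine integral_eq_zero_of_ae (Filter.Eventually.of_forall fun v => ?_)
  change ∫ s, refSimplex.indicator F (Fin.insertNth 0 s v) = 0
  simp only [Fin.insertNth_zero']
  have hmem : ∀ s : ℝ, (Fin.cons s v : Fin 3 → ℝ) ∈ refSimplex ↔
      s ∈ Set.Icc 0 (1 - ∑ k, v k) ∧ ∀ k, 0 ≤ v k := by
    intro s
    simp only [refSimplex, Set.mem_ofPred_eq, Fin.forall_fin_succ (n := 2), Fin.cons_zero,
      Fin.cons_succ, Fin.sum_univ_succ (n := 2), Set.mem_Icc]
    constructor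
    · rintro ⟨⟨a, b⟩, c⟩; exact ⟨⟨a, by linarith⟩, b⟩
    · rintro ⟨⟨a, b⟩, c⟩; exact ⟨⟨a, c⟩, by linarith⟩
  by_cases hv : (∀ k, 0 ≤ v k) ∧ 0 ≤ 1 - ∑ k, v k
  · have : (fun s : ℝ => refSimplex.indicator F (Fin.cons s v)) =
        (Set.Icc 0 (1 - ∑ k, v k)).indicator (fun s => F (Fin.cons s v)) := by
      funext s
      by_cases hs : s ∈ Set.Icc 0 (1 - ∑ k, v k)
      · rw [Set.indicator_of_mem hs, Set.indicator_of_mem ((hmem s).2 ⟨hs, hv.1⟩)]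
      · rw [Set.indicator_of_notMem hs, Set.indicator_of_notMem fun h => hs ((hmem s).1 h).1]
    rw [this, integral_indicator measurableSet_Icc, integral_Icc_eq_integral_Ioc,
      ← intervalIntegral.integral_of_le hv.2,
      intervalIntegral.integral_eq_sub_of_hasDerivAt (fun s _ => hd v s), h1, h0, sub_zero]
    refine Continuous.intervalIntegrable ?_ _ _
    have : Continuous fun s : ℝ => (Fin.cons s v : Fin 3 → ℝ) := by
      refine continuous_pi fun k => ?_
      refine Fin.cases ?_ (fun k => ?_) k
      · exact continuous_id
      · simpa using continuous_const
    exact hF.comp this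
  · have : (fun s : ℝ => refSimplex.indicator F (Fin.cons s v)) = fun _ => 0 := by
      funext s
      refine Set.indicator_of_notMem (fun h => hv ?_) _
      obtain ⟨h1, h2⟩ := (hmem s).1 h
      exact ⟨h2, h1.1.trans h1.2⟩
    rw [this, integral_zero]

/-- The affine map sending the vertices `0, e_0, e_1, e_2` of the reference tetrahedron to
`x_0, x_1, x_2, x_3`. -/
def tetMap (x : Fin 4 → Fin 3 → ℝ) (u : Fin 3 → ℝ) : Fin 3 → ℝ :=
  x 0 + ∑ k : Fin 3, u k • (x k.succ - x 0)

theorem tetMap_image (x : Fin 4 → Fin 3 → ℝ) :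
    tetMap x '' refSimplex = convexHull ℝ (Set.range x) := by
  apply Set.Subset.antisymm
  · rintro _ ⟨u, ⟨hu0, hu1⟩, rfl⟩
    have hc := (convex_convexHull ℝ (Set.range x)).sum_mem (t := Finset.univ)
      (w := Fin.cons (1 - ∑ k, u k) u) (z := x) ?_ ?_ ?_
    · convert hc using 1
      rw [Fin.sum_univ_succ]
      simp only [tetMap, Fin.cons_zero, Fin.cons_succ, smul_sub, Finset.sum_sub_distrib, sub_smul,
        one_smul, Finset.sum_smul]
      abel
    · intro k _
      refine Fin.cases ?_ (fun k => ?_) k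
      · simpa using hu1
      · simpa using hu0 k
    · rw [Fin.sum_univ_succ]; simp
    · exact fun k _ => subset_convexHull ℝ _ ⟨k, rfl⟩
  · refine convexHull_min ?_ ?_
    · rintro _ ⟨k, rfl⟩
      refine Fin.cases ?_ (fun k => ?_) k
      · exact ⟨0, ⟨by simp, by simp⟩, by simp [tetMap]⟩
      · refine ⟨Pi.single k 1, ⟨fun l => ?_, by simp⟩, ?_⟩
        · by_cases h : l = k
          · subst h; simp
          · simp [h]
        · simp [tetMap, Pi.single_apply]
    · rintro _ ⟨u, hu, rfl⟩ _ ⟨w, hw, rfl⟩ a b ha hb hab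
      refine ⟨a • u + b • w, ⟨fun k => ?_, ?_⟩, ?_⟩
      · have := mul_nonneg ha (hu.1 k)
        have := mul_nonneg hb (hw.1 k)
        simp only [Pi.add_apply, Pi.smul_apply, smul_eq_mul]; linarith
      · have := mul_le_mul_of_nonneg_left hu.2 ha
        have := mul_le_mul_of_nonneg_left hw.2 hb
        simp only [Pi.add_apply, Pi.smul_apply, smul_eq_mul, Finset.sum_add_distrib,
          ← Finset.mul_sum]
        linarith
      · obtain rfl : b = 1 - a := by linarith
        ext l
        simp [tetMap, Fin.sum_univ_three]
        ring

theorem eval_affine_tetMap (x : Fin 4 → Fin 3 → ℝ) (P : MvPolynomial (Fin 3) ℝ)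
    (h : P.totalDegree ≤ 1) (u : Fin 3 → ℝ) :
    eval (tetMap x u) P =
      eval (x 0) P + ∑ k : Fin 3, u k * (eval (x k.succ) P - eval (x 0) P) := by
  obtain ⟨c, g, hg⟩ := exists_affine_form P h
  simp only [hg, tetMap, dotProduct_add, dotProduct_sum, dotProduct_smul, dotProduct_sub,
    smul_eq_mul, add_sub_add_left_eq_sub]
  ring

theorem tetMap_hasFDerivAt (x : Fin 4 → Fin 3 → ℝ) : ∃ L : (Fin 3 → ℝ) →L[ℝ] (Fin 3 → ℝ),
    ∀ u, HasFDerivAt (tetMap x) L u := by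
  refine ⟨∑ k : Fin 3, (ContinuousLinearMap.proj (R := ℝ) (φ := fun _ : Fin 3 => ℝ) k).smulRight
    (x k.succ - x 0), fun u => ?_⟩
  have := (∑ k : Fin 3, (ContinuousLinearMap.proj (R := ℝ) (φ := fun _ : Fin 3 => ℝ) k).smulRight
    (x k.succ - x 0)).hasFDerivAt (x := u)
  refine (this.const_add (x 0)).congr_of_eventuallyEq (Filter.Eventually.of_forall fun w => ?_)
  simp [tetMap]

/-- `integral_dirDeriv_edge` for the edge `x_0 x_1`. -/
theorem integral_dirDeriv_first_edge (x : Fin 4 → Fin 3 → ℝ)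
    (lam : Fin 4 → MvPolynomial (Fin 3) ℝ)
    (hlamdeg : ∀ m, (lam m).totalDegree ≤ 1)
    (hdelta : ∀ m l, eval (x l) (lam m) = if m = l then 1 else 0)
    (q : MvPolynomial (Fin 3) ℝ) :
    ∫ y in convexHull ℝ (Set.range x),
      eval y (dirDeriv (x 1 - x 0) (lam 0 * lam 1 * q)) = 0 := by
  have hl0 : ∀ u, eval (tetMap x u) (lam 0) = 1 - ∑ k, u k := by
    intro u
    rw [eval_affine_tetMap x _ (hlamdeg 0)]
    simp [hdelta, (Fin.succ_ne_zero _).symm, sub_eq_add_neg]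
  have hls : ∀ u (k : Fin 3), eval (tetMap x u) (lam k.succ) = u k := by
    intro u k
    rw [eval_affine_tetMap x _ (hlamdeg _)]
    simp [hdelta, Fin.succ_ne_zero]
  obtain ⟨L, hL⟩ := tetMap_hasFDerivAt x
  -- The barycentric coordinates recover `u` from its image.
  have hinj : Set.InjOn (tetMap x) refSimplex := by
    intro u _ w _ h
    ext k
    rw [← hls u k, ← hls w k, h]
  rw [← tetMap_image, integral_image_eq_integral_abs_det_fderiv_smul volume
    measurableSet_refSimplex (fun u _ => (hL u).hasFDerivWithinAt) hinj]
  simp only [smul_eq_mul]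
  rw [integral_const_mul]
  -- The Jacobian is a constant factor; its value is irrelevant.
  refine mul_eq_zero_of_right _ ?_
  refine integral_refSimplex_eq_zero (fun u => eval (tetMap x u) (lam 0 * lam 1 * q)) _
    ?_ ?_ ?_ ?_
  · have : Continuous (tetMap x) :=
      continuous_iff_continuousAt.2 fun u => (hL u).continuousAt
    exact (MvPolynomial.continuous_eval _).comp this
  · intro v s
    have hline : ∀ s : ℝ, tetMap x (Fin.cons s v) =
        tetMap x (Fin.cons 0 v) + s • (x 1 - x 0) := by
      intro s
      simp only [tetMap, Fin.sum_univ_succ (n := 2), Fin.cons_zero, Fin.cons_succ, zero_smul,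
        zero_add, Fin.succ_zero_eq_one]
      abel
    have := hasDerivAt_eval_line (x 1 - x 0) (tetMap x (Fin.cons 0 v)) (lam 0 * lam 1 * q) s
    rw [← hline] at this
    exact this.congr_of_eventuallyEq (Filter.Eventually.of_forall fun s => by
      simp only [← hline])
  · intro v
    have := hls (Fin.cons 0 v) 0
    simp only [Fin.succ_zero_eq_one, Fin.cons_zero] at this
    simp [this]
  · intro v
    have := hl0 (Fin.cons (1 - ∑ k, v k) v)
    rw [Fin.sum_univ_succ (n := 2)] at this
    simp only [Fin.cons_zero, Fin.cons_succ, sub_add_cancel, sub_self] at this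
    rw [map_mul, map_mul, this, zero_mul, zero_mul]

theorem exists_perm_edge : ∀ i j : Fin 4, i < j → ∃ σ : Equiv.Perm (Fin 4), σ 0 = i ∧ σ 1 = j := by
  decide

/-- The derivative of `λ_i λ_j q` along the edge `x_i x_j` has integral zero over the tetrahedron:
on each line parallel to the edge, `λ_i λ_j` vanishes where the line enters and leaves. -/
theorem integral_dirDeriv_edge (x : Fin 4 → Fin 3 → ℝ)
    (lam : Fin 4 → MvPolynomial (Fin 3) ℝ)
    (hlamdeg : ∀ m, (lam m).totalDegree ≤ 1)
    (hdelta : ∀ m l, eval (x l) (lam m) = if m = l then 1 else 0)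
    (q : MvPolynomial (Fin 3) ℝ) {i j : Fin 4} (hij : i < j) :
    ∫ y in convexHull ℝ (Set.range x),
      eval y (dirDeriv (x j - x i) (lam i * lam j * q)) = 0 := by
  obtain ⟨σ, rfl, rfl⟩ := exists_perm_edge i j hij
  have := integral_dirDeriv_first_edge (x ∘ σ) (lam ∘ σ) (fun m => hlamdeg _)
    (fun m l => by simp [hdelta]) q
  rwa [σ.surjective.range_comp] at this

/-- For a rigid motion `r(y) = a + W y`, the tangential component `t · r` is constant along `t`. -/
theorem dirDeriv_rigid (t a : Fin 3 → ℝ) (W : Matrix (Fin 3) (Fin 3) ℝ) (hW : Wᵀ = -W) :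
    dirDeriv t (∑ l, C (t l) * (C (a l) + ∑ n, C (W l n) * X n)) = 0 := by
  have hskew : ∀ l n, W n l = -W l n := fun l n => congrFun (congrFun hW l) n
  have hdiag : ∀ l, W l l = 0 := fun l => by linarith [hskew l l]
  simp only [dirDeriv, Fin.sum_univ_three, map_add, Derivation.leibniz, pderiv_C, smul_eq_mul,
    pderiv_X, hdiag, hskew 0 1, hskew 0 2, hskew 1 2, map_neg, map_zero]
  simp
  ring

theorem bubbleDiv_eq (x : Fin 4 → Fin 3 → ℝ)
    (lam : Fin 4 → MvPolynomial (Fin 3) ℝ)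
    (p : {q : Fin 4 × Fin 4 // q.1 < q.2} → MvPolynomial (Fin 3) ℝ) (l : Fin 3) :
    bubbleDiv x lam p l = ∑ ij : {q : Fin 4 × Fin 4 // q.1 < q.2},
      C ((x ij.1.2 - x ij.1.1) l) *
        dirDeriv (x ij.1.2 - x ij.1.1) (lam ij.1.1 * lam ij.1.2 * p ij) := by
  simp only [bubbleDiv, bubbleEntry, map_sum]
  rw [Finset.sum_comm]
  refine Finset.sum_congr rfl fun ij _ => ?_
  rw [dirDeriv, Finset.mul_sum]
  refine Finset.sum_congr rfl fun m _ => ?_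
  rw [mul_comm, ← smul_eq_C_mul, Derivation.map_smul, smul_eq_C_mul, edgeTensor,
    vecMulVec_apply, C_mul, mul_assoc]

/-- The divergence of any edge-bubble function is L²(K)-orthogonal to every
rigid motion `r(x) = a + W x` with `W` skew-symmetric. -/
theorem bubble_divergence_orthogonal_to_rigid_motions
    (x : Fin 4 → Fin 3 → ℝ)
    (hx : LinearIndependent ℝ ![x 1 - x 0, x 2 - x 0, x 3 - x 0])
    (lam : Fin 4 → MvPolynomial (Fin 3) ℝ)
    (hlamdeg : ∀ m, (lam m).totalDegree ≤ 1)
    (hdelta : ∀ m l, eval (x l) (lam m) = if m = l then 1 else 0)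
    (k : ℕ) (hk : 4 ≤ k)
    (p : {q : Fin 4 × Fin 4 // q.1 < q.2} → MvPolynomial (Fin 3) ℝ)
    (hp : ∀ ij, (p ij).totalDegree ≤ k - 2) :
    ∀ (a : Fin 3 → ℝ) (W : Matrix (Fin 3) (Fin 3) ℝ), Wᵀ = -W →
      ∫ y in convexHull ℝ {x 0, x 1, x 2, x 3},
        (∑ l, eval y (bubbleDiv x lam p l) * (a l + (W *ᵥ y) l)) = 0 := by
  intro a W hW
  have hrange : ({x 0, x 1, x 2, x 3} : Set (Fin 3 → ℝ)) = Set.range x := by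
    ext y
    simp [Fin.exists_fin_succ, eq_comm]
  have hint : ∀ y, (∑ l, eval y (bubbleDiv x lam p l) * (a l + (W *ᵥ y) l)) =
      ∑ ij : {q : Fin 4 × Fin 4 // q.1 < q.2},
        eval y (dirDeriv (x ij.1.2 - x ij.1.1) (lam ij.1.1 * lam ij.1.2 *
          (p ij * ∑ l, C ((x ij.1.2 - x ij.1.1) l) * (C (a l) + ∑ n, C (W l n) * X n)))) := by
    intro y
    simp only [bubbleDiv_eq, map_sum, Finset.sum_mul]
    rw [Finset.sum_comm]
    refine Finset.sum_congr rfl fun ij _ => ?_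
    rw [← mul_assoc (lam _ * lam _), dirDeriv_mul _ _ (Finset.sum _ _),
      dirDeriv_rigid _ a W hW, mul_zero, add_zero]
    simp only [map_sum, map_mul, map_add, eval_C, eval_X, mulVec, dotProduct]
    rw [Finset.mul_sum]
    refine Finset.sum_congr rfl fun l _ => ?_
    ring
  have hK : IsCompact (convexHull ℝ (Set.range x)) := (Set.finite_range x).isCompact_convexHull ℝ
  simp only [hint, hrange]
  rw [integral_finsetSum _ fun ij _ =>
    (MvPolynomial.continuous_eval _).continuousOn.integrableOn_compact hK]
  exact Finset.sum_eq_zero fun ij _ => integral_dirDeriv_edge x lam hlamdeg hdelta _ ij.2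
end

section
/- Let x0, x1, x2, x3 ∈ ℝ³ be affinely independent with barycentric coordinates λ_0, …, λ_3, edge tensors T_ij = (x_j − x_i)(x_j − x_i)ᵀ, and K = conv{x0, x1, x2, x3}, and let k ≥ 4 be an integer. Then the image under the row-wise divergence of the edge-bubble space Σ_{K,b} = { Σ_{0 ≤ i < j ≤ 3} λ_i λ_j p_ij T_ij : p_ij polynomials of degree ≤ k − 2 } equals the space of all polynomial vector fields v : ℝ³ → ℝ³ of degree at most k − 1 satisfying ∫_K v(x) · r(x) dx = 0 for every rigid motion r(x) = a + W x (a ∈ ℝ³, W skew-symmetric 3×3). -/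
/-!
The proof is a duality argument. Write `⟨v, w⟩ = ∫_K v · w`, a positive definite pairing on
polynomial vector fields, since `K` has nonempty interior.

*Integration by parts* (`IsBarycentric.integ_bubbleDiv`). For `t = x_j - x_i` the divergence of
`λ_i λ_j p t tᵀ` is `∂_t(λ_i λ_j p) t`, so `⟨div τ, w⟩ = -∑ ∫_K λ_i λ_j p_ij (tᵀ ε(w) t)`, where
`ε(w)` is the symmetric gradient, provided that `∫_K ∂_t(λ_i λ_j q) = 0` for every polynomial `q`.
For the latter (`IsBarycentric.integral_dirDeriv`), the function `λ_i λ_j q` extended by zero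
outside `K` is continuous on each line in direction `t`, because such a line leaves `K` through a
face on which `λ_i` or `λ_j` vanishes. The fundamental theorem of calculus on the segment from `y`
to `y + t`, integrated over all `y`, gives the claim by translation invariance.

*The image is orthogonal to rigid motions*, since `ε(r) = 0` for a rigid motion `r`.

*Nothing else is orthogonal to the image* (`IsBarycentric.rigid_of_orthogonal`). If `w` of degree at
most `k - 1` is orthogonal to the image, the choice `p_ij = tᵀ ε(w) t` shows that
`∑ ∫_K λ_i λ_j (tᵀ ε(w) t)² = 0`, so `tᵀ ε(w) t = 0` for all six edges. As the edge tensors span the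
symmetric matrices, `ε(w) = 0`, and `w` is a rigid motion.

The image is finite-dimensional, so a field `v` orthogonal to rigid motions has a projection `s` onto
it. The residual `v - s` is a rigid motion orthogonal to both `v` and `s`, and therefore zero.
-/

open Matrix MvPolynomial MeasureTheory

namespace EdgeBubble

/-! ### Polynomial calculus -/

/-- Real polynomials in the three space variables. -/
abbrev Poly := MvPolynomial (Fin 3) ℝ

/-- The derivative of a polynomial in the direction `t`. -/
noncomputable def dirDeriv (t : Fin 3 → ℝ) (p : Poly) : Poly :=
  ∑ m, C (t m) * pderiv m p

lemma dirDeriv_add (t : Fin 3 → ℝ) (p q : Poly) :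
    dirDeriv t (p + q) = dirDeriv t p + dirDeriv t q := by
  simp [dirDeriv, mul_add, Finset.sum_add_distrib]

lemma dirDeriv_mul (t : Fin 3 → ℝ) (p q : Poly) :
    dirDeriv t (p * q) = dirDeriv t p * q + p * dirDeriv t q := by
  simp only [dirDeriv, pderiv_mul, Finset.sum_mul, Finset.mul_sum, ← Finset.sum_add_distrib]
  refine Finset.sum_congr rfl fun m _ => by ring

lemma totalDegree_pderiv_le (i : Fin 3) (p : Poly) :
    (pderiv i p).totalDegree ≤ p.totalDegree - 1 := by
  refine Finset.sup_le fun m hm => ?_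
  have h1 : coeff (m + Finsupp.single i 1) p ≠ 0 := by
    intro h
    rw [mem_support_iff, coeff_pderiv, h, zero_mul] at hm
    exact hm rfl
  have h2 := le_totalDegree (mem_support_iff.2 h1)
  rw [Finsupp.sum_add_index' (by simp) (by simp), Finsupp.sum_single_index rfl] at h2
  omega

lemma eq_C_of_pderiv_eq_zero (p : Poly) (h : ∀ i, pderiv i p = 0) : p = C (coeff 0 p) := by
  ext m
  rw [coeff_C]
  split_ifs with hm
  · rw [hm]
  obtain ⟨i, hi⟩ : ∃ i, m i ≠ 0 := by
    by_contra! hc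
    exact hm (Finsupp.ext fun i => (hc i).symm)
  have h1 := coeff_pderiv (i := i) p (m - Finsupp.single i 1)
  have hle : Finsupp.single i 1 ≤ m := by
    rw [Finsupp.single_le_iff]; omega
  rw [h i, tsub_add_cancel_of_le hle, coeff_zero] at h1
  have h2 : ((m - Finsupp.single i 1 : Fin 3 →₀ ℕ) i : ℝ) + 1 ≠ 0 := by positivity
  rcases mul_eq_zero.1 h1.symm with h | h
  · exact h
  · exact absurd h h2

lemma pderiv_pderiv_comm (i j : Fin 3) (p : Poly) : pderiv i (pderiv j p) = pderiv j (pderiv i p) := by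
  ext m
  simp only [coeff_pderiv]
  rw [add_right_comm]
  by_cases h : i = j
  · subst h; rfl
  · simp [h, Ne.symm h]; ring

lemma eq_affine_of_pderiv_eq_C (p : Poly) (d : Fin 3 → ℝ) (h : ∀ i, pderiv i p = C (d i)) :
    ∃ c : ℝ, p = C c + ∑ i, C (d i) * X i := by
  refine ⟨_, sub_eq_iff_eq_add.1 (eq_C_of_pderiv_eq_zero (p - ∑ i, C (d i) * X i) fun i => ?_)⟩
  rw [map_sub, h, map_sum]
  simp [pderiv_X, Pi.single_apply]

lemma eq_affine_of_totalDegree_le_one (p : Poly) (hp : p.totalDegree ≤ 1) :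
    ∃ (c : ℝ) (d : Fin 3 → ℝ), p = C c + ∑ i, C (d i) * X i := by
  obtain ⟨c, hc⟩ := eq_affine_of_pderiv_eq_C p (fun i => coeff 0 (pderiv i p)) fun i => by
    refine totalDegree_eq_zero_iff_eq_C.1 ?_
    have := totalDegree_pderiv_le i p
    omega
  exact ⟨c, _, hc⟩

/-- A polynomial vector field with vanishing symmetric gradient is a rigid motion. -/
lemma rigid_of_symGrad_eq_zero (v : Fin 3 → Poly)
    (h : ∀ i j, pderiv i (v j) + pderiv j (v i) = 0) :
    ∃ (a : Fin 3 → ℝ) (W : Matrix (Fin 3) (Fin 3) ℝ), Wᵀ = -W ∧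
      ∀ l, v l = C (a l) + ∑ m, C (W l m) * X m := by
  have hs : ∀ i j, pderiv i (v j) = - pderiv j (v i) := fun i j => eq_neg_of_add_eq_zero_left (h i j)
  have h2 : ∀ k i j, pderiv k (pderiv i (v j)) = 0 := by
    intro k i j
    -- `∂ₖ∂ᵢvⱼ` is symmetric in `k, i` and antisymmetric in `i, j`.
    have c := fun a b c => pderiv_pderiv_comm a b (v c)
    have n : ∀ a b c, pderiv a (pderiv b (v c)) = - pderiv a (pderiv c (v b)) := fun a b c => by
      rw [hs b c, map_neg]
    have e2 : (2 : Poly) * pderiv k (pderiv i (v j)) = 0 := by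
      linear_combination n k i j - c k j i - n j k i + c j i k + n i j k - c i k j
    simpa using e2
  have h3 : ∀ l m, pderiv m (v l) = C (coeff 0 (pderiv m (v l))) := fun l m =>
    eq_C_of_pderiv_eq_zero _ fun k => h2 k m l
  choose a ha using fun l => eq_affine_of_pderiv_eq_C (v l) _ (h3 l)
  refine ⟨a, Matrix.of fun l m => coeff 0 (pderiv m (v l)), ?_, ha⟩
  ext l m
  simp [hs l m]

lemma hasDerivAt_eval_line (t y : Fin 3 → ℝ) (p : Poly) (s : ℝ) :
    HasDerivAt (fun s : ℝ => eval (y + s • t) p) (eval (y + s • t) (dirDeriv t p)) s := by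
  induction p using MvPolynomial.induction_on with
  | C a => simpa [dirDeriv] using hasDerivAt_const s a
  | add p q hp hq => simpa [dirDeriv_add] using hp.fun_add hq
  | mul_X p i hp =>
    have hX : HasDerivAt (fun s : ℝ => y i + s * t i) (t i) s := by
      simpa using ((hasDerivAt_id s).mul_const (t i)).const_add (y i)
    have hd : dirDeriv t (X i : Poly) = C (t i) := by
      simp [dirDeriv, pderiv_X, Pi.single_apply]
    simpa [dirDeriv_mul, hd] using hp.fun_mul hX

lemma eq_zero_of_eval_eq_zero_on_open (p : Poly) (U : Set (Fin 3 → ℝ)) (hU : IsOpen U)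
    (hne : U.Nonempty) (h : ∀ y ∈ U, eval y p = 0) : p = 0 := by
  obtain ⟨y, hy⟩ := hne
  obtain ⟨u, hu, hsub⟩ := (isOpen_pi_iff'.1 hU) y hy
  refine funext_set u (fun i => ?_) fun z hz => by simpa using h z (hsub hz)
  exact infinite_of_mem_nhds (y i) ((hu i).1.mem_nhds (hu i).2)

/-! ### The tetrahedron in barycentric coordinates -/

/-- The standing hypotheses: the points `x` are affinely independent, and `lam` is the family of
their barycentric coordinates. -/
structure IsBarycentric (x : Fin 4 → Fin 3 → ℝ) (lam : Fin 4 → Poly) : Prop where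
  indep : LinearIndependent ℝ ![x 1 - x 0, x 2 - x 0, x 3 - x 0]
  degree_le : ∀ m, (lam m).totalDegree ≤ 1
  delta : ∀ m l, eval (x l) (lam m) = if m = l then 1 else 0

/-- The tetrahedron with vertices `x 0, …, x 3`. -/
def tet (x : Fin 4 → Fin 3 → ℝ) : Set (Fin 3 → ℝ) := convexHull ℝ {x 0, x 1, x 2, x 3}

lemma isCompact_tet (x : Fin 4 → Fin 3 → ℝ) : IsCompact (tet x) :=
  (Set.toFinite _).isCompact_convexHull ℝ

lemma continuous_evalPoly (p : Poly) : Continuous fun y : Fin 3 → ℝ => eval y p :=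
  MvPolynomial.continuous_eval p

variable {x : Fin 4 → Fin 3 → ℝ} {lam : Fin 4 → Poly}

lemma eval_affine_line (p : Poly) (hp : p.totalDegree ≤ 1) (y z w : Fin 3 → ℝ) (s : ℝ) :
    eval (y + s • (z - w)) p = eval y p + s * (eval z p - eval w p) := by
  obtain ⟨c, d, rfl⟩ := eq_affine_of_totalDegree_le_one p hp
  simp [Fin.sum_univ_three]
  ring

lemma IsBarycentric.exists_weights (h : IsBarycentric x lam) (y : Fin 3 → ℝ) :
    ∃ c : Fin 3 → ℝ, y = x 0 + c 0 • (x 1 - x 0) + c 1 • (x 2 - x 0) + c 2 • (x 3 - x 0) := by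
  have hs := h.indep.span_eq_top_of_card_eq_finrank' (by simp)
  have hy : y - x 0 ∈ Submodule.span ℝ (Set.range ![x 1 - x 0, x 2 - x 0, x 3 - x 0]) := by
    rw [hs]; trivial
  obtain ⟨c, hc⟩ := (Submodule.mem_span_range_iff_exists_fun ℝ).1 hy
  refine ⟨c, ?_⟩
  simp only [Fin.sum_univ_three, Matrix.cons_val] at hc
  rw [add_assoc, add_assoc, ← sub_eq_iff_eq_add', ← hc, add_assoc]

lemma IsBarycentric.eval_lam (h : IsBarycentric x lam) (m : Fin 4) (c : Fin 3 → ℝ) :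
    eval (x 0 + c 0 • (x 1 - x 0) + c 1 • (x 2 - x 0) + c 2 • (x 3 - x 0)) (lam m)
      = ![1 - c 0 - c 1 - c 2, c 0, c 1, c 2] m := by
  rw [eval_affine_line _ (h.degree_le m), eval_affine_line _ (h.degree_le m),
    eval_affine_line _ (h.degree_le m)]
  fin_cases m <;> simp [h.delta]
  ring

lemma IsBarycentric.mem_tet_iff (h : IsBarycentric x lam) (y : Fin 3 → ℝ) :
    y ∈ tet x ↔ ∀ m, 0 ≤ eval y (lam m) := by
  constructor
  · intro hy m
    have hc : Convex ℝ {y | 0 ≤ eval y (lam m)} := by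
      intro y hy z hz a b ha hb hab
      have e : a • y + b • z = y + b • (z - y) := by
        rw [← eq_sub_iff_add_eq] at hab
        rw [hab]; module
      simp only [Set.mem_ofPred_eq] at hy hz ⊢
      rw [e, eval_affine_line _ (h.degree_le m)]
      have : a * eval y (lam m) + b * eval z (lam m) ≥ 0 := by positivity
      rw [← eq_sub_iff_add_eq] at hab
      rw [hab] at this
      linarith
    refine convexHull_min ?_ hc hy
    rintro z (rfl | rfl | rfl | rfl) <;> simp only [Set.mem_ofPred_eq, h.delta] <;>
      split_ifs <;> norm_num
  · intro hy
    obtain ⟨c, rfl⟩ := h.exists_weights y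
    simp only [h.eval_lam] at hy
    have e : x 0 + c 0 • (x 1 - x 0) + c 1 • (x 2 - x 0) + c 2 • (x 3 - x 0)
        = ∑ m, ![1 - c 0 - c 1 - c 2, c 0, c 1, c 2] m • x m := by
      simp [Fin.sum_univ_four]; module
    rw [e]
    refine (convex_convexHull ℝ _).sum_mem (fun m _ => hy m) ?_ fun m _ => subset_convexHull ℝ _ ?_
    · simp [Fin.sum_univ_four]; ring
    · fin_cases m <;> simp

lemma IsBarycentric.lam_ne_zero (h : IsBarycentric x lam) (m : Fin 4) : lam m ≠ 0 := by
  intro h0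
  have := h.delta m m
  simp [h0] at this

/-- A polynomial that is nonnegative on the tetrahedron and has zero integral vanishes. -/
lemma IsBarycentric.eq_zero_of_integral (h : IsBarycentric x lam) (p : Poly)
    (hp : ∀ y ∈ tet x, 0 ≤ eval y p) (hi : ∫ y in tet x, eval y p = 0) : p = 0 := by
  have hK := isCompact_tet x
  have h0 := (setIntegral_eq_zero_iff_of_nonneg_ae
    ((ae_restrict_iff' hK.measurableSet).2 (Filter.Eventually.of_forall hp))
    ((continuous_evalPoly p).continuousOn.integrableOn_compact hK)).1 hi
  have hO : IsOpen {y : Fin 3 → ℝ | ∀ m, 0 < eval y (lam m)} := by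
    simp only [Set.ofPred_forall]
    exact isOpen_iInter_of_finite fun m => isOpen_lt continuous_const (continuous_evalPoly _)
  have hsub : {y : Fin 3 → ℝ | ∀ m, 0 < eval y (lam m)} ⊆ tet x := fun y hy =>
    (h.mem_tet_iff y).2 fun m => (hy m).le
  refine eq_zero_of_eval_eq_zero_on_open p _ hO ?_ (Measure.eqOn_open_of_ae_eq
    (ae_restrict_of_ae_restrict_of_subset hsub h0) hO (continuous_evalPoly p).continuousOn
    continuousOn_const)
  -- The barycenter has all barycentric coordinates equal to `1/4`.
  refine ⟨x 0 + (1 / 4 : ℝ) • (x 1 - x 0) + (1 / 4 : ℝ) • (x 2 - x 0) + (1 / 4 : ℝ) • (x 3 - x 0),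
    fun m => ?_⟩
  have := h.eval_lam m fun _ => 1 / 4
  rw [this]
  fin_cases m <;> norm_num

/-! ### Integration along edge directions -/

lemma IsBarycentric.eval_line (h : IsBarycentric x lam) (i j m : Fin 4) (y : Fin 3 → ℝ) (s : ℝ) :
    eval (y + s • (x j - x i)) (lam m)
      = eval y (lam m) + s * ((if m = j then 1 else 0) - if m = i then 1 else 0) := by
  rw [eval_affine_line _ (h.degree_le m), h.delta, h.delta]

/-- On each line parallel to the edge `x i x j`, the bubble `λ_i λ_j q` extended by zero outside the
tetrahedron is continuous and piecewise smooth, so the fundamental theorem of calculus applies. -/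
lemma IsBarycentric.integral_line (h : IsBarycentric x lam) {i j : Fin 4} (hij : i ≠ j) (q : Poly)
    (y : Fin 3 → ℝ) :
    ∫ s in (0 : ℝ)..1, (tet x).indicator
        (fun y => eval y (dirDeriv (x j - x i) (lam i * lam j * q))) (y + s • (x j - x i))
      = (tet x).indicator (fun y => eval y (lam i * lam j * q)) (y + (x j - x i))
        - (tet x).indicator (fun y => eval y (lam i * lam j * q)) y := by
  set t := x j - x i with ht
  set f := lam i * lam j * q with hf
  set F := fun s : ℝ => (tet x).indicator (fun y => eval y f) (y + s • t) with hF
  have hline : Continuous fun s : ℝ => y + s • t := by fun_prop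
  have hmain := integral_eq_of_hasDerivAt_off_countable F
    (fun s : ℝ => (tet x).indicator (fun y => eval y (dirDeriv t f)) (y + s • t))
    (a := 0) (b := 1) (s := {eval y (lam i), - eval y (lam j)}) (Set.toFinite _).countable
    ?_ ?_ ?_
  · rw [hmain]; simp [hF]
  · -- If the two coordinates that are constant on the line are nonnegative, then
    -- `F s = max 0 (a - s) * max 0 (b + s) * q` with `a = λ_i y`, `b = λ_j y`; otherwise `F = 0`.
    refine Continuous.continuousOn ?_
    by_cases hc : ∀ m, m ≠ i → m ≠ j → 0 ≤ eval y (lam m)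
    · have : F = fun s => max 0 (eval y (lam i) - s) * max 0 (eval y (lam j) + s)
          * eval (y + s • t) q := by
        funext s
        have hi := h.eval_line i j i y s
        have hj := h.eval_line i j j y s
        simp only [hij, hij.symm, if_true, if_false, ← ht] at hi hj
        by_cases hmem : y + s • t ∈ tet x
        · simp only [hF, Set.indicator_of_mem hmem, hf, map_mul]
          rw [h.mem_tet_iff] at hmem
          have h1 := hmem i
          have h2 := hmem j
          rw [hi] at h1
          rw [hj] at h2
          rw [hi, hj, max_eq_right (by linarith), max_eq_right (by linarith)]
          ring
        · simp only [hF, Set.indicator_of_notMem hmem]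
          rw [h.mem_tet_iff] at hmem
          push Not at hmem
          obtain ⟨m, hm⟩ := hmem
          by_cases hmi : m = i
          · subst hmi
            rw [hi] at hm
            rw [max_eq_left (by linarith)]; simp
          by_cases hmj : m = j
          · subst hmj
            rw [hj] at hm
            rw [max_eq_left (a := (0 : ℝ)) (b := eval y (lam m) + s) (by linarith)]; simp
          have := hc m hmi hmj
          rw [ht, h.eval_line] at hm
          simp [hmi, hmj] at hm
          linarith
      rw [this]
      have := (continuous_evalPoly q).comp hline
      exact ((by fun_prop : Continuous fun s => max 0 (eval y (lam i) - s)
        * max 0 (eval y (lam j) + s))).mul this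
    · push Not at hc
      obtain ⟨m, hmi, hmj, hm⟩ := hc
      have : F = fun _ => 0 := by
        funext s
        refine Set.indicator_of_notMem (fun hmem => ?_) _
        have := (h.mem_tet_iff _).1 hmem m
        rw [ht, h.eval_line] at this
        simp [hmi, hmj] at this
        linarith
      rw [this]; exact continuous_const
  · -- Away from the parameters where `λ_i` or `λ_j` vanishes, membership in the tetrahedron is
    -- locally constant along the line.
    rintro s ⟨-, hs⟩
    simp only [Set.mem_insert_iff, Set.mem_singleton_iff, not_or] at hs
    have hi := fun s => h.eval_line i j i y s
    have hj := fun s => h.eval_line i j j y s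
    simp only [hij, hij.symm, if_true, if_false, ← ht] at hi hj
    have cont : ∀ m, Continuous fun s : ℝ => eval (y + s • t) (lam m) := fun m =>
      (continuous_evalPoly _).comp hline
    by_cases hmem : y + s • t ∈ tet x
    · simp only [Set.indicator_of_mem hmem]
      refine (hasDerivAt_eval_line t y f s).congr_of_eventuallyEq ?_
      have hmem' := (h.mem_tet_iff _).1 hmem
      have pi : 0 < eval (y + s • t) (lam i) := lt_of_le_of_ne (hmem' i) fun e => hs.1 (by
        rw [hi] at e; linarith)
      have pj : 0 < eval (y + s • t) (lam j) := lt_of_le_of_ne (hmem' j) fun e => hs.2 (by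
        rw [hj] at e; linarith)
      filter_upwards [(cont i).continuousAt.eventually (lt_mem_nhds pi),
        (cont j).continuousAt.eventually (lt_mem_nhds pj)] with r hri hrj
      refine Set.indicator_of_mem ((h.mem_tet_iff _).2 fun m => ?_) _
      by_cases hmi : m = i
      · subst hmi; exact hri.le
      by_cases hmj : m = j
      · subst hmj; exact hrj.le
      have := hmem' m
      rw [ht, h.eval_line] at this ⊢
      simpa [hmi, hmj] using this
    · simp only [Set.indicator_of_notMem hmem]
      refine (hasDerivAt_const s (0 : ℝ)).congr_of_eventuallyEq ?_
      filter_upwards [((isCompact_tet x).isClosed.preimage hline).isOpen_compl.mem_nhds hmem]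
        with r hr
      exact Set.indicator_of_notMem (a := y + r • t) hr fun y => eval y f
  · have hc : Continuous fun s : ℝ => eval (y + s • t) (dirDeriv t f) :=
      (continuous_evalPoly _).comp hline
    have := hc.intervalIntegrable (μ := volume) 0 1
    rw [intervalIntegrable_iff] at this ⊢
    exact IntegrableOn.indicator (f := fun s : ℝ => eval (y + s • t) (dirDeriv t f)) this
      ((isCompact_tet x).isClosed.preimage hline).measurableSet

/-- The derivative of the bubble `λ_i λ_j q` along the edge `x i x j` has zero integral:
its integral equals the average over `s ∈ [0, 1]` of the integrals of its translates by
`s (x j - x i)`, and integrating over `s` first leaves a difference of two translates. -/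
lemma IsBarycentric.integral_dirDeriv (h : IsBarycentric x lam) {i j : Fin 4} (hij : i ≠ j)
    (q : Poly) : ∫ y in tet x, eval y (dirDeriv (x j - x i) (lam i * lam j * q)) = 0 := by
  have hK := isCompact_tet x
  set t := x j - x i with ht
  set f := lam i * lam j * q with hf
  set g := (tet x).indicator fun y => eval y (dirDeriv t f) with hg
  set F := (tet x).indicator fun y => eval y f with hF
  have hFi : Integrable F := by
    rw [hF, integrable_indicator_iff hK.measurableSet]
    exact (continuous_evalPoly f).continuousOn.integrableOn_compact hK
  have hint : Integrable (Function.uncurry fun (s : ℝ) (y : Fin 3 → ℝ) => g (y + s • t))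
      ((volume.restrict (Set.Ioc (0 : ℝ) 1)).prod volume) := by
    have hsh : Continuous fun z : ℝ × (Fin 3 → ℝ) => z.2 + z.1 • t := by fun_prop
    have hA : IsCompact (Set.image (fun z : ℝ × (Fin 3 → ℝ) => (z.1, z.2 - z.1 • t))
        (Set.Icc (0 : ℝ) 1 ×ˢ tet x)) := (isCompact_Icc.prod hK).image (by fun_prop)
    have hI : IntegrableOn (fun z : ℝ × (Fin 3 → ℝ) => eval (z.2 + z.1 • t) (dirDeriv t f)) _
        (volume.prod volume) :=
      (((continuous_evalPoly (dirDeriv t f)).comp hsh).continuousOn).integrableOn_compact hA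
    have e : (volume.restrict (Set.Ioc (0 : ℝ) 1)).prod (volume : Measure (Fin 3 → ℝ))
        = (volume.prod volume).restrict (Set.Ioc (0 : ℝ) 1 ×ˢ Set.univ) := by
      rw [← Measure.prod_restrict, Measure.restrict_univ]
    rw [e]
    have e2 : (Function.uncurry fun (s : ℝ) (y : Fin 3 → ℝ) => g (y + s • t))
        = ((fun z : ℝ × (Fin 3 → ℝ) => z.2 + z.1 • t) ⁻¹' tet x).indicator
          fun z => eval (z.2 + z.1 • t) (dirDeriv t f) := rfl
    rw [e2, integrable_indicator_iff (hK.isClosed.preimage hsh).measurableSet, IntegrableOn,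
      Measure.restrict_restrict (hK.isClosed.preimage hsh).measurableSet]
    refine hI.mono_set ?_
    rintro ⟨s, y⟩ ⟨hy, hs, -⟩
    exact ⟨(s, y + s • t), ⟨⟨hs.1.le, hs.2⟩, hy⟩, by simp⟩
  have swap := integral_integral_swap hint
  simp only [integral_add_right_eq_self] at swap
  have hin : ∀ y, ∫ s in Set.Ioc (0 : ℝ) 1, g (y + s • t) = F (y + t) - F y := fun y => by
    rw [← intervalIntegral.integral_of_le zero_le_one]
    exact h.integral_line hij q y
  simp only [hin] at swap
  rw [integral_sub (hFi.comp_add_right t) hFi, integral_add_right_eq_self, sub_self] at swap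
  rw [← integral_indicator hK.measurableSet]
  simpa using swap

/-! ### Strains and the divergence of edge bubbles -/

/-- The strain of `w` along `t`, that is `tᵀ ε(w) t`. -/
noncomputable def strain (t : Fin 3 → ℝ) (w : Fin 3 → Poly) : Poly :=
  dirDeriv t (∑ l, C (t l) * w l)

lemma dirDeriv_smul (t : Fin 3 → ℝ) (c : ℝ) (p : Poly) :
    dirDeriv t (c • p) = c • dirDeriv t p := by
  simp [dirDeriv, Finset.smul_sum]

lemma totalDegree_dirDeriv_le (t : Fin 3 → ℝ) (p : Poly) :
    (dirDeriv t p).totalDegree ≤ p.totalDegree - 1 := by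
  refine totalDegree_finsetSum_le fun m _ => (totalDegree_mul _ _).trans ?_
  simpa using totalDegree_pderiv_le m p

lemma totalDegree_strain_le (t : Fin 3 → ℝ) (w : Fin 3 → Poly) (n : ℕ)
    (hw : ∀ l, (w l).totalDegree ≤ n) : (strain t w).totalDegree ≤ n - 1 := by
  refine (totalDegree_dirDeriv_le _ _).trans (Nat.sub_le_sub_right ?_ 1)
  refine totalDegree_finsetSum_le fun m _ => (totalDegree_mul _ _).trans ?_
  simpa using hw m

lemma eval_strain (t : Fin 3 → ℝ) (w : Fin 3 → Poly) (y : Fin 3 → ℝ) :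
    eval y (strain t w) = ∑ l, ∑ m, t l * t m * eval y (pderiv m (w l)) := by
  simp only [strain, dirDeriv, map_sum, map_mul, eval_C, pderiv_C_mul, Finset.mul_sum]
  rw [Finset.sum_comm]
  exact Finset.sum_congr rfl fun l _ => Finset.sum_congr rfl fun m _ => by ring

/-- The index set of the edges. -/
abbrev Edge := {q : Fin 4 × Fin 4 // q.1 < q.2}

/-- The edge vector `x_j - x_i`. -/
def edgeVec (x : Fin 4 → Fin 3 → ℝ) (e : Edge) : Fin 3 → ℝ := x e.1.2 - x e.1.1

lemma bubbleDiv_eq (x : Fin 4 → Fin 3 → ℝ) (lam : Fin 4 → Poly) (p : Edge → Poly) (l : Fin 3) :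
    bubbleDiv x lam p l = ∑ e : Edge,
      C (edgeVec x e l) * dirDeriv (edgeVec x e) (lam e.1.1 * lam e.1.2 * p e) := by
  simp only [bubbleDiv, bubbleEntry, map_sum, dirDeriv, Finset.mul_sum]
  rw [Finset.sum_comm]
  refine Finset.sum_congr rfl fun e _ => Finset.sum_congr rfl fun m _ => ?_
  rw [mul_comm _ (C _), pderiv_C_mul, edgeTensor, vecMulVec_apply, C_mul, mul_assoc]
  rfl

lemma IsBarycentric.totalDegree_bubbleDiv_le (h : IsBarycentric x lam) (p : Edge → Poly) (k : ℕ)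
    (hk : 4 ≤ k) (hp : ∀ e, (p e).totalDegree ≤ k - 2) (l : Fin 3) :
    (bubbleDiv x lam p l).totalDegree ≤ k - 1 := by
  rw [bubbleDiv_eq]
  refine totalDegree_finsetSum_le fun e _ => (totalDegree_mul _ _).trans ?_
  have h1 := totalDegree_dirDeriv_le (edgeVec x e) (lam e.1.1 * lam e.1.2 * p e)
  have h2 := totalDegree_mul (lam e.1.1 * lam e.1.2) (p e)
  have h3 := totalDegree_mul (lam e.1.1) (lam e.1.2)
  have h4 := h.degree_le e.1.1
  have h5 := h.degree_le e.1.2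
  have h6 := hp e
  rw [totalDegree_C]
  omega

/-- Integration over the tetrahedron as a linear functional on polynomials. -/
noncomputable def integ (x : Fin 4 → Fin 3 → ℝ) : Poly →ₗ[ℝ] ℝ where
  toFun p := ∫ y in tet x, eval y p
  map_add' p q := by
    simp only [map_add]
    exact integral_add ((continuous_evalPoly p).continuousOn.integrableOn_compact (isCompact_tet x))
      ((continuous_evalPoly q).continuousOn.integrableOn_compact (isCompact_tet x))
  map_smul' c p := by
    simp only [smul_eval, RingHom.id_apply, smul_eq_mul]
    exact integral_const_mul _ _

/-- Integration by parts: `∫ div τ · w = -∫ τ : ε(w)` for an edge bubble `τ`. -/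
lemma IsBarycentric.integ_bubbleDiv (h : IsBarycentric x lam) (p : Edge → Poly)
    (w : Fin 3 → Poly) :
    integ x (∑ l, bubbleDiv x lam p l * w l)
      = - ∑ e : Edge, integ x (lam e.1.1 * lam e.1.2 * p e * strain (edgeVec x e) w) := by
  have e1 : ∑ l, bubbleDiv x lam p l * w l = ∑ e : Edge,
      (dirDeriv (edgeVec x e) (lam e.1.1 * lam e.1.2 * (p e * ∑ l, C (edgeVec x e l) * w l))
        - lam e.1.1 * lam e.1.2 * p e * strain (edgeVec x e) w) := by
    simp only [bubbleDiv_eq, Finset.sum_mul]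
    rw [Finset.sum_comm]
    refine Finset.sum_congr rfl fun e _ => ?_
    rw [← mul_assoc (lam e.1.1 * lam e.1.2), dirDeriv_mul _ (lam e.1.1 * lam e.1.2 * p e), strain,
      add_sub_cancel_right, Finset.mul_sum]
    exact Finset.sum_congr rfl fun l _ => by ring
  have e2 : ∀ e : Edge, integ x (dirDeriv (edgeVec x e)
      (lam e.1.1 * lam e.1.2 * (p e * ∑ l, C (edgeVec x e l) * w l))) = 0 := fun e =>
    h.integral_dirDeriv e.2.ne _
  rw [e1, map_sum, ← Finset.sum_neg_distrib]
  refine Finset.sum_congr rfl fun e _ => ?_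
  rw [map_sub, e2, zero_sub]

/-- The six edge tensors span the symmetric matrices: a quadratic form vanishing on all edge
vectors vanishes identically. -/
lemma IsBarycentric.symGrad_eq_zero (h : IsBarycentric x lam) (w : Fin 3 → Poly)
    (hw : ∀ e : Edge, strain (edgeVec x e) w = 0) (i j : Fin 3) :
    pderiv i (w j) + pderiv j (w i) = 0 := by
  have hQ : ∀ u : Fin 3 → ℝ, strain u w = 0 := by
    intro u
    refine MvPolynomial.funext fun y => ?_
    obtain ⟨c, hc⟩ := h.exists_weights (x 0 + u)
    have hu : ∀ l, u l = c 0 * (x 1 l - x 0 l) + c 1 * (x 2 l - x 0 l) + c 2 * (x 3 l - x 0 l) := by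
      intro l
      have := congrFun hc l
      simp only [Pi.add_apply, Pi.smul_apply, Pi.sub_apply, smul_eq_mul] at this
      linarith
    have hE : ∀ (i j : Fin 4) (hij : i < j),
        ∑ l, ∑ m, (x j l - x i l) * (x j m - x i m) * eval y (pderiv m (w l)) = 0 := by
      intro i j hij
      have := eval_strain (edgeVec x ⟨(i, j), hij⟩) w y
      rw [hw, map_zero] at this
      exact this.symm
    have h01 := hE 0 1 (by decide)
    have h02 := hE 0 2 (by decide)
    have h03 := hE 0 3 (by decide)
    have h12 := hE 1 2 (by decide)
    have h13 := hE 1 3 (by decide)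
    have h23 := hE 2 3 (by decide)
    rw [eval_strain, map_zero]
    simp only [Fin.sum_univ_three, hu] at h01 h02 h03 h12 h13 h23 ⊢
    linear_combination (c 0 ^ 2 + c 0 * c 1 + c 0 * c 2) * h01
      + (c 1 ^ 2 + c 0 * c 1 + c 1 * c 2) * h02 + (c 2 ^ 2 + c 0 * c 2 + c 1 * c 2) * h03
      - c 0 * c 1 * h12 - c 0 * c 2 * h13 - c 1 * c 2 * h23
  refine MvPolynomial.funext fun y => ?_
  have hq : ∀ u : Fin 3 → ℝ, ∑ l, ∑ m, u l * u m * eval y (pderiv m (w l)) = 0 := fun u => by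
    rw [← eval_strain, hQ, map_zero]
  have h1 := hq (Pi.single i 1)
  have h2 := hq (Pi.single j 1)
  have h3 := hq (Pi.single i 1 + Pi.single j 1)
  simp only [Pi.add_apply, add_mul, mul_add, Finset.sum_add_distrib, Pi.single_apply, ite_mul,
    mul_ite, one_mul, mul_one, zero_mul, mul_zero, Finset.sum_ite_eq',
    Finset.mem_univ, if_true] at h1 h2 h3
  rw [map_add, map_zero]
  linarith

/-! ### Rigid motions and the orthogonality argument -/

/-- The polynomial vector field of the rigid motion `y ↦ a + W y`. -/
noncomputable def rigid (a : Fin 3 → ℝ) (W : Matrix (Fin 3) (Fin 3) ℝ) (l : Fin 3) : Poly :=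
  C (a l) + ∑ m, C (W l m) * X m

lemma strain_rigid (t a : Fin 3 → ℝ) (W : Matrix (Fin 3) (Fin 3) ℝ) (hW : Wᵀ = -W) :
    strain t (rigid a W) = 0 := by
  refine MvPolynomial.funext fun y => ?_
  have hW' : ∀ l m, W m l = - W l m := fun l m => congrFun (congrFun hW l) m
  rw [eval_strain, map_zero]
  simp only [rigid, map_add, map_sum, pderiv_C, pderiv_C_mul, pderiv_X, Pi.single_apply,
    eval_C, zero_add, mul_ite, mul_one, mul_zero,
    Finset.sum_ite_eq', Finset.mem_univ, if_true]
  simp only [Fin.sum_univ_three]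
  linear_combination (t 0 ^ 2 / 2) * hW' 0 0 + (t 1 ^ 2 / 2) * hW' 1 1 + (t 2 ^ 2 / 2) * hW' 2 2
    + t 0 * t 1 * hW' 0 1 + t 0 * t 2 * hW' 0 2 + t 1 * t 2 * hW' 1 2

lemma integral_rigid (v : Fin 3 → Poly) (a : Fin 3 → ℝ) (W : Matrix (Fin 3) (Fin 3) ℝ) :
    ∫ y in convexHull ℝ {x 0, x 1, x 2, x 3}, (∑ l, eval y (v l) * (a l + (W *ᵥ y) l))
      = integ x (∑ l, v l * rigid a W l) := by
  change _ = ∫ y in tet x, eval y (∑ l, v l * rigid a W l)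
  simp only [tet, rigid, Matrix.mulVec, dotProduct, map_sum, map_mul, map_add, eval_C, eval_X]

/-- The divergence of edge bubbles as a linear map on coefficient families of degree at most `n`. -/
noncomputable def divMap (x : Fin 4 → Fin 3 → ℝ) (lam : Fin 4 → Poly) (n : ℕ) :
    (Edge → restrictTotalDegree (Fin 3) ℝ n) →ₗ[ℝ] (Fin 3 → Poly) where
  toFun p l := bubbleDiv x lam (fun e => p e) l
  map_add' p q := by
    funext l
    simp [bubbleDiv_eq, mul_add, dirDeriv_add, Finset.sum_add_distrib]
  map_smul' c p := by
    funext l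
    simp [bubbleDiv_eq, dirDeriv_smul, Finset.smul_sum]

/-- The `L²` pairing of polynomial vector fields on the tetrahedron. -/
noncomputable def pairing (x : Fin 4 → Fin 3 → ℝ) :
    (Fin 3 → Poly) →ₗ[ℝ] (Fin 3 → Poly) →ₗ[ℝ] ℝ :=
  LinearMap.mk₂ ℝ (fun v w => integ x (∑ l, v l * w l))
    (fun _ _ _ => by simp [add_mul, Finset.sum_add_distrib])
    (fun _ _ _ => by simp [← Finset.smul_sum])
    (fun _ _ _ => by simp [mul_add, Finset.sum_add_distrib])
    (fun _ _ _ => by simp [← Finset.smul_sum])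

lemma pairing_apply (v w : Fin 3 → Poly) : pairing x v w = integ x (∑ l, v l * w l) := rfl

lemma pairing_comm (v w : Fin 3 → Poly) : pairing x v w = pairing x w v := by
  simp only [pairing_apply, mul_comm]

lemma IsBarycentric.eq_zero_of_pairing_self (h : IsBarycentric x lam) (w : Fin 3 → Poly)
    (hw : pairing x w w = 0) : w = 0 := by
  have hz := h.eq_zero_of_integral (∑ l, w l * w l) (fun y _ => by
    rw [map_sum]
    exact Finset.sum_nonneg fun l _ => by rw [map_mul]; exact mul_self_nonneg _) hw
  funext l
  refine MvPolynomial.funext fun y => ?_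
  have h1 := congrArg (eval y) hz
  rw [map_sum, map_zero] at h1
  have h2 := (Finset.sum_eq_zero_iff_of_nonneg fun l _ => by
    rw [map_mul]; exact mul_self_nonneg _).1 h1 l (Finset.mem_univ l)
  rw [map_mul] at h2
  simpa using mul_self_eq_zero.1 h2

/-- Every field splits as an element of a finite-dimensional subspace `S` plus a field
`L²`-orthogonal to `S`. -/
lemma IsBarycentric.exists_projection (h : IsBarycentric x lam) (S : Submodule ℝ (Fin 3 → Poly))
    [FiniteDimensional ℝ S] (v : Fin 3 → Poly) :
    ∃ s ∈ S, ∀ u ∈ S, pairing x u (v - s) = 0 := by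
  let Φ : S →ₗ[ℝ] Module.Dual ℝ S := (pairing x).domRestrict₁₂ S S
  have hinj : Function.Injective Φ := by
    refine (injective_iff_map_eq_zero Φ).2 fun s hs => Subtype.ext ?_
    exact h.eq_zero_of_pairing_self s (LinearMap.congr_fun hs s)
  have hsurj : Function.Surjective Φ :=
    (LinearMap.injective_iff_surjective_of_finrank_eq_finrank
      (Subspace.dual_finrank_eq (K := ℝ) (V := S)).symm).1 hinj
  obtain ⟨s, hs⟩ := hsurj ((pairing x v).domRestrict S)
  refine ⟨s, s.2, fun u hu => ?_⟩
  have := LinearMap.congr_fun hs ⟨u, hu⟩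
  have h' : pairing x s u = pairing x v u := this
  rw [pairing_comm, map_sub, LinearMap.sub_apply, h', sub_self]

/-- A field of degree at most `k - 1` that is orthogonal to all divergences of edge bubbles is a
rigid motion: test with the bubble whose coefficients are the edge strains of `w`. -/
lemma IsBarycentric.rigid_of_orthogonal (h : IsBarycentric x lam) (k : ℕ) (w : Fin 3 → Poly)
    (hdeg : ∀ l, (w l).totalDegree ≤ k - 1)
    (hw : ∀ p : Edge → Poly, (∀ e, (p e).totalDegree ≤ k - 2) →
      integ x (∑ l, bubbleDiv x lam p l * w l) = 0) :
    ∃ (a : Fin 3 → ℝ) (W : Matrix (Fin 3) (Fin 3) ℝ), Wᵀ = -W ∧ w = rigid a W := by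
  have h0 := hw (fun e => strain (edgeVec x e) w) fun e => totalDegree_strain_le _ _ _ hdeg
  rw [h.integ_bubbleDiv, neg_eq_zero] at h0
  have hpos : ∀ e : Edge, ∀ y ∈ tet x, 0 ≤ eval y
      (lam e.1.1 * lam e.1.2 * strain (edgeVec x e) w * strain (edgeVec x e) w) := by
    intro e y hy
    have h1 := (h.mem_tet_iff y).1 hy e.1.1
    have h2 := (h.mem_tet_iff y).1 hy e.1.2
    simp only [map_mul, mul_assoc (_ * _)]
    exact mul_nonneg (mul_nonneg h1 h2) (mul_self_nonneg _)
  have hz := (Finset.sum_eq_zero_iff_of_nonneg fun e _ =>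
    setIntegral_nonneg (isCompact_tet x).measurableSet (hpos e)).1 h0
  have hs : ∀ e : Edge, strain (edgeVec x e) w = 0 := fun e => by
    have := h.eq_zero_of_integral _ (hpos e) (hz e (Finset.mem_univ e))
    simpa [h.lam_ne_zero] using this
  obtain ⟨a, W, hW, hv⟩ := rigid_of_symGrad_eq_zero w (h.symGrad_eq_zero w hs)
  exact ⟨a, W, hW, funext hv⟩

end EdgeBubble

open EdgeBubble in
/-- The image of the edge-bubble space `Σ_{K,b}` under the row-wise divergence
equals the space of polynomial vector fields of degree ≤ k−1 that are
L²(K)-orthogonal to all rigid motions. -/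
theorem divergence_of_bubble_space_eq_rigid_motion_free_polynomials
    (x : Fin 4 → Fin 3 → ℝ)
    (hx : LinearIndependent ℝ ![x 1 - x 0, x 2 - x 0, x 3 - x 0])
    (lam : Fin 4 → MvPolynomial (Fin 3) ℝ)
    (hlamdeg : ∀ m, (lam m).totalDegree ≤ 1)
    (hdelta : ∀ m l, eval (x l) (lam m) = if m = l then 1 else 0)
    (k : ℕ) (hk : 4 ≤ k) :
    {v : Fin 3 → MvPolynomial (Fin 3) ℝ |
        ∃ p : {q : Fin 4 × Fin 4 // q.1 < q.2} → MvPolynomial (Fin 3) ℝ,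
          (∀ ij, (p ij).totalDegree ≤ k - 2) ∧
          ∀ l, v l = bubbleDiv x lam p l}
      =
    {v : Fin 3 → MvPolynomial (Fin 3) ℝ |
        (∀ l, (v l).totalDegree ≤ k - 1) ∧
        ∀ (a : Fin 3 → ℝ) (W : Matrix (Fin 3) (Fin 3) ℝ), Wᵀ = -W →
          ∫ y in convexHull ℝ {x 0, x 1, x 2, x 3},
            (∑ l, eval y (v l) * (a l + (W *ᵥ y) l)) = 0} := by
  have h : IsBarycentric x lam := ⟨hx, hlamdeg, hdelta⟩
  ext v
  constructor
  · rintro ⟨p, hp, hv⟩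
    obtain rfl : v = fun l => bubbleDiv x lam p l := funext hv
    refine ⟨h.totalDegree_bubbleDiv_le p k hk hp, fun a W hW => ?_⟩
    rw [integral_rigid, h.integ_bubbleDiv]
    simp [strain_rigid _ _ _ hW]
  · rintro ⟨hdeg, horth⟩
    obtain ⟨s, ⟨p, rfl⟩, hs⟩ := h.exists_projection (LinearMap.range (divMap x lam (k - 2))) v
    have hp : ∀ e, (p e : Poly).totalDegree ≤ k - 2 := fun e =>
      (mem_restrictTotalDegree _ _ _).1 (p e).2
    refine ⟨fun e => p e, hp, ?_⟩
    obtain ⟨a, W, hW, hw⟩ := h.rigid_of_orthogonal k (v - divMap x lam (k - 2) p)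
      (fun l => (totalDegree_sub _ _).trans
        (max_le (hdeg l) (h.totalDegree_bubbleDiv_le _ k hk hp l)))
      (fun q hq => hs _ ⟨fun e => ⟨q e, (mem_restrictTotalDegree _ _ _).2 (hq e)⟩, rfl⟩)
    have h1 : pairing x v (rigid a W) = 0 := by
      rw [pairing_apply, ← integral_rigid]
      exact horth a W hW
    have h2 := hs _ ⟨p, rfl⟩
    -- The residual is rigid, hence orthogonal to `v`, and it is orthogonal to the projection.
    have h3 : v - divMap x lam (k - 2) p = 0 := by
      refine h.eq_zero_of_pairing_self _ ?_
      rw [LinearMap.map_sub₂, h2, sub_zero, hw, h1]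
    exact fun l => congrFun (sub_eq_zero.1 h3) l
end
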